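/- arXiv:2407.04817 — 3 statements merged into one kernel-verified Lean document; each statement's English description precedes it below -/
import Mathlib

section
/- Let (Q,I) be a gentle bound quiver with marked ribbon graph (G,≤) = △(Q,I). The following are equivalent: (1) (Q,I) satisfies the multi-clock condition; (2) there exists a pair of string functions S,T for (Q,I) with S ≡ −T; (3) the underlying graph of G is bipartite (there is a 2-coloring of its vertices such that the two endpoints of every edge receive different colors). -/
set_option autoImplicit false

attribute [local instance] Classical.propDecidable

/-- A bound-quiver datum: a quiver (source and target maps on a set of arrows) together
with a set of length-two relations; `rel a b` means that the length-two path `ab`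
(composable, i.e. `src a = tgt b`; paths are written from right to left) lies in the
generating set of relations of the ideal `I`. -/
structure BQuiv (V A : Type) where
  src : A → V
  tgt : A → V
  rel : A → A → Prop

namespace BQuiv

variable {V A : Type}

/-- `l` is (the list of arrows of) a path of the quiver, written from right to left:
`l = [a₁, a₂, …, a_ℓ]` represents `a₁a₂⋯a_ℓ` and we ask `src aₜ = tgt aₜ₊₁`. -/
def PathChain (Q : BQuiv V A) (l : List A) : Prop :=
  l.Chain' (fun a b => Q.src a = Q.tgt b)

/-- The degree of a vertex: the number of outgoing plus the number of incoming arrows. -/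
noncomputable def deg (Q : BQuiv V A) (v : V) : ℕ :=
  Nat.card {a : A // Q.src a = v} + Nat.card {a : A // Q.tgt a = v}

/-- `(Q, I)` is a gentle bound quiver. -/
structure IsGentle (Q : BQuiv V A) : Prop where
  /-- relations are composable length-two paths -/
  rel_comp : ∀ a b, Q.rel a b → Q.src a = Q.tgt b
  /-- at most two outgoing arrows at every vertex -/
  out_le : ∀ v, Nat.card {a : A // Q.src a = v} ≤ 2
  /-- at most two incoming arrows at every vertex -/
  in_le : ∀ v, Nat.card {a : A // Q.tgt a = v} ≤ 2
  /-- for every arrow `b` there is at most one arrow `a` with `ab ∉ I` -/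
  unique_nonrel_post : ∀ b a a', Q.src a = Q.tgt b → Q.src a' = Q.tgt b →
    ¬ Q.rel a b → ¬ Q.rel a' b → a = a'
  /-- for every arrow `b` there is at most one arrow `c` with `bc ∉ I` -/
  unique_nonrel_pre : ∀ b c c', Q.src b = Q.tgt c → Q.src b = Q.tgt c' →
    ¬ Q.rel b c → ¬ Q.rel b c' → c = c'
  /-- for every arrow `b` there is at most one arrow `a` with `ab ∈ I` -/
  unique_rel_post : ∀ b a a', Q.rel a b → Q.rel a' b → a = a'
  /-- for every arrow `b` there is at most one arrow `c` with `bc ∈ I` -/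
  unique_rel_pre : ∀ b c c', Q.rel b c → Q.rel b c' → c = c'
  /-- admissibility: there is `m ≥ 2` such that every path of length `m` contains a
  length-two subpath lying in the relation set -/
  admissible : ∃ m, 2 ≤ m ∧ ∀ l : List A, l.length = m → Q.PathChain l →
    ¬ l.Chain' (fun a b => ¬ Q.rel a b)
  /-- the quiver is connected -/
  connected : ∀ u v : V, Relation.ReflTransGen
    (fun x y => ∃ a, (Q.src a = x ∧ Q.tgt a = y) ∨ (Q.src a = y ∧ Q.tgt a = x)) u v
  /-- the quiver has at least one arrow -/
  has_arrow : Nonempty A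

/-- A path of the quiver `Q`, with a base (source) vertex so that trivial paths make
sense.  The arrows are written from right to left. -/
structure Path (Q : BQuiv V A) where
  base : V
  arrows : List A
  chain : arrows.Chain' (fun a b => Q.src a = Q.tgt b)
  base_eq : ∀ a, arrows.getLast? = some a → Q.src a = base

variable {Q : BQuiv V A}

/-- The source vertex of a path. -/
def Path.srcV (p : Path Q) : V := p.base

/-- The target vertex of a path. -/
def Path.tgtV (p : Path Q) : V := p.arrows.head?.elim p.base Q.tgt

/-- The vertex of a path sitting between its first `n` arrows and the rest:
the center of the corresponding split of the path. -/
def Path.vertexAt (p : Path Q) (n : ℕ) : V :=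
  (p.arrows.drop n).head?.elim p.base Q.tgt

/-- A path is permitted if none of its length-two subpaths is a relation. -/
def Path.Permitted (p : Path Q) : Prop :=
  p.arrows.Chain' (fun a b => ¬ Q.rel a b)

/-- A path is forbidden if each of its length-two subpaths is a relation. -/
def Path.Forbidden (p : Path Q) : Prop :=
  p.arrows.Chain' (fun a b => Q.rel a b)

/-- Permitted threads: maximal non-trivial permitted paths, together with the trivial
paths `e_i` at vertices `i` with `deg i = 1`, or `deg i = 2` with the two arrows
`α, β` at `i` satisfying `src α = tgt β = i` and `αβ ∉ I`. -/
def IsPermThread (Q : BQuiv V A) (p : Path Q) : Prop :=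
  (p.arrows ≠ [] ∧ p.Permitted ∧
    (∀ a b, p.arrows.head? = some b → Q.src a = Q.tgt b → Q.rel a b) ∧
    (∀ a c, p.arrows.getLast? = some a → Q.src a = Q.tgt c → Q.rel a c)) ∨
  (p.arrows = [] ∧ (Q.deg p.base = 1 ∨ (Q.deg p.base = 2 ∧
    ∃ α β, Q.src α = p.base ∧ Q.tgt β = p.base ∧ ¬ Q.rel α β)))

/-- Forbidden threads: maximal non-trivial forbidden paths, together with the trivial
paths `e_i` at vertices `i` with `deg i = 1`, or `deg i = 2` with the two arrows
`α, β` at `i` satisfying `src α = tgt β = i` and `αβ ∈ I`. -/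
def IsForbThread (Q : BQuiv V A) (p : Path Q) : Prop :=
  (p.arrows ≠ [] ∧ p.Forbidden ∧
    (∀ a b, p.arrows.head? = some b → Q.src a = Q.tgt b → ¬ Q.rel a b) ∧
    (∀ a c, p.arrows.getLast? = some a → Q.src a = Q.tgt c → ¬ Q.rel a c)) ∨
  (p.arrows = [] ∧ (Q.deg p.base = 1 ∨ (Q.deg p.base = 2 ∧
    ∃ α β, Q.src α = p.base ∧ Q.tgt β = p.base ∧ Q.rel α β)))

end BQuiv

namespace BQuiv

variable {V A : Type}

/-- The type of permitted threads of `(Q, I)`: the vertices of the associated marked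
ribbon graph `△(Q, I)`. -/
def PThread (Q : BQuiv V A) : Type := {p : Path Q // IsPermThread Q p}

/-- The type of split permitted threads of `(Q, I)`: a permitted thread together with a
cut position.  These are the half-edges of the associated marked ribbon graph
`△(Q, I)`. -/
def PSplit (Q : BQuiv V A) : Type := {x : PThread Q × ℕ // x.2 ≤ x.1.1.arrows.length}

/-- The thread (vertex of `△(Q, I)`) over which a split permitted thread lies. -/
def PSplit.thread {Q : BQuiv V A} (x : PSplit Q) : PThread Q := x.1.1

/-- The cut position of a split permitted thread. -/
def PSplit.idx {Q : BQuiv V A} (x : PSplit Q) : ℕ := x.1.2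

/-- The center of a split permitted thread `(η″, η′)`: the vertex `s(η″) = t(η′)`.
The centers realize the bijection between the edges of `△(Q, I)` and the vertices
of `Q`. -/
def PSplit.center {Q : BQuiv V A} (x : PSplit Q) : V :=
  x.1.1.1.vertexAt x.1.2

end BQuiv

namespace BQuiv

variable {V A : Type}

/-- A letter of a walk of the quiver: an arrow `(a, true)` or a formal inverse
`(a, false)`. -/
abbrev Letter (A : Type) : Type := A × Bool

/-- The source vertex of a letter. -/
def lsrc (Q : BQuiv V A) (c : Letter A) : V := if c.2 then Q.src c.1 else Q.tgt c.1

/-- The target vertex of a letter. -/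
def ltgt (Q : BQuiv V A) (c : Letter A) : V := if c.2 then Q.tgt c.1 else Q.src c.1

/-- The inverse of a letter. -/
def linv (c : Letter A) : Letter A := (c.1, !c.2)

/-- `l` is (the list of letters of) a walk of the quiver, written from right to left. -/
def WalkChain (Q : BQuiv V A) (l : List (Letter A)) : Prop :=
  l.Chain' (fun c d => Q.lsrc c = Q.ltgt d)

/-- A walk is closed when its source equals its target. -/
def WalkClosed (Q : BQuiv V A) (l : List (Letter A)) : Prop :=
  ∀ c, l.head? = some c → ∀ d, l.getLast? = some d → Q.lsrc d = Q.ltgt c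

/-- A walk has no repeated edges when no arrow occurs twice (in either direction). -/
def NoRepeatedEdges (l : List (Letter A)) : Prop := (l.map Prod.fst).Nodup

/-- The number of relations of `R` contained in the closed walk `w = c₁⋯c_ℓ`: the
number of length-two subpaths of `w` or of `w⁻¹` lying in `R`, including the
wrap-around pairs `c_ℓc₁` and `c₁⁻¹c_ℓ⁻¹` when they consist of arrows and lie in `R`.
(Computed over the cyclically consecutive pairs of letters of `w`.) -/
noncomputable def relCount (Q : BQuiv V A) (l : List (Letter A)) : ℕ :=
  ((l.zip (l.rotate 1)).map (fun cd =>
    if (cd.1.2 = true ∧ cd.2.2 = true ∧ Q.rel cd.1.1 cd.2.1) ∨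
       (cd.1.2 = false ∧ cd.2.2 = false ∧ Q.rel cd.2.1 cd.1.1)
    then (1 : ℕ) else 0)).sum

/-- `(Q, I)` satisfies the multi-clock condition: every non-trivial closed walk of `Q`
without repeated edges contains an even number of relations. -/
def MultiClock (Q : BQuiv V A) : Prop :=
  ∀ l : List (Letter A), l ≠ [] → Q.WalkChain l → Q.WalkClosed l →
    NoRepeatedEdges l → Even (Q.relCount l)

end BQuiv

namespace BQuiv

variable {V A : Type}

/-- A pair of (Butler–Ringel) string functions for `(Q, I)`, with `Bool` standing for
`{±1}`. -/
def IsStringPair (Q : BQuiv V A) (S T : A → Bool) : Prop :=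
  (∀ a b, a ≠ b → Q.src a = Q.src b → S a ≠ S b) ∧
  (∀ a b, a ≠ b → Q.tgt a = Q.tgt b → T a ≠ T b) ∧
  (∀ a b, Q.tgt a = Q.src b → (Q.rel b a ↔ T a = S b))

end BQuiv

open BQuiv

/-!
Write the signs `±1` additively, in characteristic two. For any pair of string functions `S`, `T`,
two consecutive letters of a reduced walk carry signs `s`, `t` at their common vertex, and
`s + t + 1` is `1` if they form a relation and `0` otherwise. The number of relations in a closed
walk without repeated edges is therefore, modulo two, the sum of `S a + T a + 1` over its arrows
`a`, and the multi-clock condition says that this labelling of the arrows has weight zero on such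
walks. It then has weight zero on all closed walks, so it is a coboundary `g (src a) + g (tgt a)`,
and changing the signs at every vertex `v` by `g v` yields a pair of string functions with
`S ≡ -T`.

A pair with `S ≡ -T` is a `2`-coloring of the arrows that is constant along permitted paths. As
every arrow lies on exactly one permitted thread, it is also a `2`-coloring of the non-trivial
permitted threads, and the conditions on string functions say that the two half-edges centered at a
vertex have different colors.
-/

namespace BQuiv

variable {V A : Type} {Q : BQuiv V A}

/-! ### Walks and potentials -/

section Potential

variable {M : Type*} [AddCommMonoid M] {l : List (Letter A)} {u v : V}

/-- `Q.IsWalk u l v`: the list of letters `l`, written from right to left, is a walk from `u`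
to `v`. The endpoints are recorded so that the trivial walks are included. -/
def IsWalk (Q : BQuiv V A) (u : V) : List (Letter A) → V → Prop
  | [], v => u = v
  | c :: l, v => Q.ltgt c = v ∧ Q.IsWalk u l (Q.lsrc c)

/-- The weight of a walk with respect to a labelling `σ` of the arrows. An arrow and its formal
inverse contribute the same, as is appropriate in characteristic two. -/
def weight (σ : A → M) (l : List (Letter A)) : M :=
  (l.map fun c => σ c.1).sum

lemma lsrc_linv (c : Letter A) : Q.lsrc (linv c) = Q.ltgt c := by
  rcases c with ⟨a, _ | _⟩ <;> rfl

lemma ltgt_linv (c : Letter A) : Q.ltgt (linv c) = Q.lsrc c := by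
  rcases c with ⟨a, _ | _⟩ <;> rfl

lemma eq_or_eq_linv_of_fst_eq {c d : Letter A} (h : c.1 = d.1) : c = d ∨ c = linv d := by
  rcases c with ⟨a, _ | _⟩ <;> rcases d with ⟨b, _ | _⟩ <;> simp_all [linv]

lemma isWalk_append {l₁ l₂ : List (Letter A)} :
    Q.IsWalk u (l₁ ++ l₂) v ↔ ∃ w, Q.IsWalk u l₂ w ∧ Q.IsWalk w l₁ v := by
  induction l₁ generalizing v with
  | nil => simp [IsWalk]
  | cons c l₁ ih => simp only [List.cons_append, IsWalk, ih, ← exists_and_left, and_left_comm]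

lemma IsWalk.reverse (h : Q.IsWalk u l v) : Q.IsWalk v (l.map linv).reverse u := by
  induction l generalizing v with
  | nil => exact h.symm
  | cons c l ih =>
    rw [List.map_cons, List.reverse_cons, isWalk_append]
    exact ⟨Q.lsrc c, ⟨ltgt_linv c, ((lsrc_linv c).trans h.1).symm⟩, ih h.2⟩

lemma IsWalk.ltgt_of_head?_eq (h : Q.IsWalk u l v) {c : Letter A} (hc : l.head? = some c) :
    Q.ltgt c = v := by
  obtain ⟨l, rfl⟩ := List.head?_eq_some_iff.1 hc
  exact h.1

lemma IsWalk.lsrc_of_getLast?_eq (h : Q.IsWalk u l v) {c : Letter A}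
    (hc : l.getLast? = some c) : Q.lsrc c = u := by
  obtain ⟨l, rfl⟩ := List.getLast?_eq_some_iff.1 hc
  obtain ⟨w, hw, -⟩ := isWalk_append.1 h
  exact hw.2.symm

lemma IsWalk.walkChain (h : Q.IsWalk u l v) : Q.WalkChain l := by
  induction l generalizing v with
  | nil => exact List.IsChain.nil
  | cons c l ih =>
    exact List.isChain_cons.2 ⟨fun d hd => (h.2.ltgt_of_head?_eq hd).symm, ih h.2⟩

lemma IsWalk.walkClosed (h : Q.IsWalk u l u) : Q.WalkClosed l := fun _ hc _ hd =>
  (h.lsrc_of_getLast?_eq hd).trans (h.ltgt_of_head?_eq hc).symm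

lemma exists_isWalk
    (h : Relation.ReflTransGen
      (fun x y => ∃ a, (Q.src a = x ∧ Q.tgt a = y) ∨ (Q.src a = y ∧ Q.tgt a = x)) u v) :
    ∃ l, Q.IsWalk u l v := by
  induction h with
  | refl => exact ⟨[], rfl⟩
  | tail _ hstep ih =>
    obtain ⟨l, hl⟩ := ih
    obtain ⟨a, ⟨rfl, rfl⟩ | ⟨rfl, rfl⟩⟩ := hstep
    · exact ⟨(a, true) :: l, rfl, hl⟩
    · exact ⟨(a, false) :: l, rfl, hl⟩

lemma weight_append (σ : A → M) (l₁ l₂ : List (Letter A)) :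
    weight σ (l₁ ++ l₂) = weight σ l₁ + weight σ l₂ := by
  simp [weight]

lemma weight_reverse (σ : A → M) (l : List (Letter A)) :
    weight σ (l.map linv).reverse = weight σ l := by
  simp [weight, Function.comp_def, linv]

lemma weight_cons (σ : A → M) (c : Letter A) (l : List (Letter A)) :
    weight σ (c :: l) = σ c.1 + weight σ l :=
  List.sum_cons

lemma NoRepeatedEdges.sublist {l l' : List (Letter A)} (h : NoRepeatedEdges l)
    (hl : l'.Sublist l) : NoRepeatedEdges l' :=
  List.Nodup.sublist (hl.map Prod.fst) h

variable {R : Type*} [Semiring R] [CharP R 2] {σ : A → R}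

/-- If the next edge already occurs in the reduced walk, the letters traversed since then form a
closed walk, which is cut out. -/
lemma IsWalk.exists_noRepeatedEdges
    (hσ : ∀ l u, Q.IsWalk u l u → NoRepeatedEdges l → weight σ l = 0) (h : Q.IsWalk u l v) :
    ∃ l', Q.IsWalk u l' v ∧ NoRepeatedEdges l' ∧ weight σ l' = weight σ l := by
  induction l generalizing v with
  | nil => exact ⟨[], h, List.nodup_nil, rfl⟩
  | cons c l ih =>
    obtain ⟨l', hwalk, hnodup, hweight⟩ := ih h.2
    by_cases hc : c.1 ∈ l'.map Prod.fst
    · obtain ⟨d, hd, hdc⟩ := List.mem_map.1 hc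
      obtain ⟨l₁, l₂, rfl⟩ := List.append_of_mem hd
      obtain ⟨w, ⟨rfl, hl₂⟩, hl₁⟩ := isWalk_append.1 hwalk
      rw [weight_append, weight_cons] at hweight
      rcases eq_or_eq_linv_of_fst_eq hdc with rfl | rfl
      · have hclosed : Q.IsWalk (Q.lsrc d) (l₁ ++ [d]) (Q.lsrc d) :=
          isWalk_append.2 ⟨Q.ltgt d, ⟨rfl, rfl⟩, hl₁⟩
        have hzero : weight σ l₁ + σ d.1 = 0 := by
          simpa [weight] using hσ _ _ hclosed (hnodup.sublist (by simp))
        refine ⟨d :: l₂, ⟨h.1, hl₂⟩, hnodup.sublist (by simp), ?_⟩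
        rw [weight_cons, weight_cons, ← hweight, ← add_assoc (weight σ l₁), hzero, zero_add]
      · have hzero : weight σ l₁ = 0 :=
          hσ l₁ (Q.lsrc c) (ltgt_linv c ▸ hl₁) (hnodup.sublist (by simp))
        refine ⟨l₂, h.1 ▸ lsrc_linv (Q := Q) c ▸ hl₂, hnodup.sublist (by simp), ?_⟩
        rw [weight_cons, ← hweight, hzero, zero_add]
        exact (CharTwo.add_cancel_left _ _).symm
    · exact ⟨c :: l', ⟨h.1, hwalk⟩, List.nodup_cons.2 ⟨hc, hnodup⟩, by
        rw [weight_cons, weight_cons, hweight]⟩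

lemma exists_potential (hwalk : ∀ v, ∃ l, Q.IsWalk u l v)
    (hσ : ∀ l u, Q.IsWalk u l u → NoRepeatedEdges l → weight σ l = 0) :
    ∃ g : V → R, ∀ a, σ a = g (Q.src a) + g (Q.tgt a) := by
  choose w hw using hwalk
  refine ⟨fun v => weight σ (w v), fun a => ?_⟩
  let round : List (Letter A) := ((w (Q.tgt a)).map linv).reverse ++ (a, true) :: w (Q.src a)
  have hround : Q.IsWalk u round u :=
    isWalk_append.2 ⟨Q.tgt a, ⟨rfl, hw (Q.src a)⟩, (hw (Q.tgt a)).reverse⟩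
  obtain ⟨l, hl, hnodup, hweight⟩ := hround.exists_noRepeatedEdges hσ
  have hzero : weight σ (w (Q.tgt a)) + (σ a + weight σ (w (Q.src a))) = 0 := by
    rw [← hσ l u hl hnodup, hweight, weight_append, weight_reverse, weight_cons]
  calc σ a = weight σ (w (Q.tgt a)) + (weight σ (w (Q.tgt a)) + (σ a + weight σ (w (Q.src a))))
        + weight σ (w (Q.src a)) := by rw [CharTwo.add_cancel_left, CharTwo.add_cancel_right]
    _ = weight σ (w (Q.src a)) + weight σ (w (Q.tgt a)) := by rw [hzero, add_zero, add_comm]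

end Potential

/-! ### String functions -/

section StringFunctions

variable {S T : A → Bool}

instance charP_bool_two : CharP Bool 2 :=
  CharTwo.of_one_ne_zero_of_two_eq_zero (by decide : true ≠ false) rfl

/-- The value of a pair of string functions at the source end of a letter. Exchanging `S` and `T`
gives the value at its target end. -/
def letterSign (S T : A → Bool) (c : Letter A) : Bool :=
  if c.2 then S c.1 else T c.1

lemma IsStringPair.natCast_ite_rel_eq (hST : IsStringPair Q S T) {c d : Letter A}
    (hcd : Q.lsrc c = Q.ltgt d) (hne : c ≠ linv d) :
    ((if (c.2 = true ∧ d.2 = true ∧ Q.rel c.1 d.1) ∨ (c.2 = false ∧ d.2 = false ∧ Q.rel d.1 c.1)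
      then 1 else 0 : ℕ) : Bool) = letterSign S T c + letterSign T S d + 1 := by
  obtain ⟨hS, hT, hrel⟩ := hST
  have add_add_one_of_ne : ∀ {s t : Bool}, s ≠ t → (0 : Bool) = s + t + 1 := by decide
  have ite_eq_add_add_one : ∀ s t : Bool, (if s = t then 1 else 0 : Bool) = s + t + 1 := by decide
  rcases c with ⟨a, _ | _⟩ <;> rcases d with ⟨b, _ | _⟩
  · simpa [letterSign, hrel a b hcd] using ite_eq_add_add_one (T a) (S b)
  · simpa [letterSign] using add_add_one_of_ne (hT a b (by rintro rfl; exact hne rfl) hcd)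
  · simpa [letterSign] using add_add_one_of_ne (hS a b (by rintro rfl; exact hne rfl) hcd)
  · simpa [letterSign, hrel b a hcd.symm, eq_comm] using ite_eq_add_add_one (S a) (T b)

lemma WalkChain.lsrc_eq_ltgt_of_mem_zip_rotate {l : List (Letter A)} (hchain : Q.WalkChain l)
    (hclosed : Q.WalkClosed l) {c d : Letter A} (h : (c, d) ∈ l.zip (l.rotate 1)) :
    Q.lsrc c = Q.ltgt d := by
  obtain _ | ⟨e, l⟩ := l
  · simp at h
  · have hcyclic : Q.WalkChain (e :: l ++ [e]) :=
      List.isChain_append.2 ⟨hchain, List.isChain_singleton e, by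
        rintro c hc d ⟨⟩
        exact hclosed e rfl c hc⟩
    have hpairs := List.isChain_iff_forall₂.1 hcyclic
    rw [List.dropLast_concat] at hpairs
    exact (List.forall₂_iff_zip.1 hpairs).2 (by simpa using h)

lemma NoRepeatedEdges.ne_linv_of_mem {l : List (Letter A)} (h : NoRepeatedEdges l)
    {c d : Letter A} (hc : c ∈ l) (hd : d ∈ l) : c ≠ linv d := by
  rintro rfl
  have hlinv : linv d = d := List.inj_on_of_nodup_map h hc hd rfl
  simp [linv, Prod.ext_iff] at hlinv

lemma sum_map_zip_rotate {α M : Type*} [AddCommMonoid M] (f g : α → M) (l : List α) (n : ℕ) :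
    ((l.zip (l.rotate n)).map fun p => f p.1 + g p.2).sum = (l.map fun x => f x + g x).sum := by
  have hfst : (l.zip (l.rotate n)).map Prod.fst = l := List.map_fst_zip (l.length_rotate n).ge
  have hsnd : (l.zip (l.rotate n)).map Prod.snd = l.rotate n :=
    List.map_snd_zip (l.length_rotate n).le
  calc ((l.zip (l.rotate n)).map fun p => f p.1 + g p.2).sum
      = (((l.zip (l.rotate n)).map Prod.fst).map f).sum
        + (((l.zip (l.rotate n)).map Prod.snd).map g).sum := by
        rw [List.sum_map_add, List.map_map, List.map_map]
        rfl
    _ = (l.map fun x => f x + g x).sum := by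
        rw [hfst, hsnd, ((l.rotate_perm n).map g).sum_eq, List.sum_map_add]

lemma letterSign_add_letterSign_swap (S T : A → Bool) (c : Letter A) :
    letterSign S T c + letterSign T S c = S c.1 + T c.1 := by
  rcases c with ⟨a, _ | _⟩
  · exact add_comm _ _
  · rfl

lemma IsStringPair.natCast_relCount (hST : IsStringPair Q S T) {l : List (Letter A)}
    (hchain : Q.WalkChain l) (hclosed : Q.WalkClosed l) (hnodup : NoRepeatedEdges l) :
    (Q.relCount l : Bool) = weight (fun a => S a + T a + 1) l := by
  calc (Q.relCount l : Bool)
      = ((l.zip (l.rotate 1)).map fun cd =>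
          letterSign S T cd.1 + (letterSign T S cd.2 + 1)).sum := by
        rw [relCount, Nat.cast_list_sum, List.map_map]
        refine congrArg List.sum (List.map_congr_left fun ⟨c, d⟩ hcd => ?_)
        obtain ⟨hc, hd⟩ := List.of_mem_zip hcd
        rw [← add_assoc]
        exact hST.natCast_ite_rel_eq (hchain.lsrc_eq_ltgt_of_mem_zip_rotate hclosed hcd)
          (hnodup.ne_linv_of_mem hc (List.mem_rotate.1 hd))
    _ = (l.map fun c => letterSign S T c + (letterSign T S c + 1)).sum :=
        sum_map_zip_rotate (letterSign S T) (fun c => letterSign T S c + 1) l 1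
    _ = weight (fun a => S a + T a + 1) l := by
        simp only [← add_assoc, letterSign_add_letterSign_swap, weight]

lemma IsStringPair.switch (hST : IsStringPair Q S T) (g : V → Bool) :
    IsStringPair Q (fun a => S a + g (Q.src a)) (fun a => T a + g (Q.tgt a)) := by
  obtain ⟨hS, hT, hrel⟩ := hST
  refine ⟨fun a b hab h => ?_, fun a b hab h => ?_, fun a b h => ?_⟩
  · simpa only [h, ne_eq, add_left_inj] using hS a b hab h
  · simpa only [h, ne_eq, add_left_inj] using hT a b hab h
  · simpa only [h, add_left_inj] using hrel a b h

lemma IsGentle.exists_isWalk (hQ : Q.IsGentle) (u v : V) : ∃ l, Q.IsWalk u l v :=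
  BQuiv.exists_isWalk (hQ.connected u v)

lemma IsGentle.rel_iff_not_rel (hQ : Q.IsGentle) {a b b' : A} (hb : Q.src b = Q.tgt a)
    (hb' : Q.src b' = Q.tgt a) (hne : b ≠ b') : Q.rel b a ↔ ¬ Q.rel b' a :=
  ⟨fun h h' => hne (hQ.unique_rel_post a b b' h h'),
    fun h' => by_contra fun h => hne (hQ.unique_nonrel_post a b b' hb hb' h h')⟩

lemma IsGentle.eq_of_rel_iff_rel (hQ : Q.IsGentle) {a a' b : A} (ha : Q.src b = Q.tgt a)
    (ha' : Q.src b = Q.tgt a') (hrel : Q.rel b a ↔ Q.rel b a') : a = a' := by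
  by_cases h : Q.rel b a
  · exact hQ.unique_rel_pre b a a' h (hrel.1 h)
  · exact hQ.unique_nonrel_pre b a a' ha ha' h (mt hrel.2 h)

lemma exists_bool_ne_of_card_fiber_le_two {α β : Type*} (f : α → β)
    [∀ b, Finite {a // f a = b}] (hcard : ∀ b, Nat.card {a // f a = b} ≤ 2) :
    ∃ s : α → Bool, ∀ a a', a ≠ a' → f a = f a' → s a ≠ s a' := by
  have hembed (b : β) : Nonempty ({a // f a = b} ↪ Bool) := by
    have := Fintype.ofFinite {a // f a = b}
    refine Function.Embedding.nonempty_of_card_le ?_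
    rw [← Nat.card_eq_fintype_card]
    exact hcard b
  let e (b : β) : {a // f a = b} ↪ Bool := (hembed b).some
  refine ⟨fun a => e (f a) ⟨a, rfl⟩, fun a a' hne hf h => hne ?_⟩
  have he : ∀ b (h : f a' = b), e (f a') ⟨a', rfl⟩ = e b ⟨a', h⟩ := by
    rintro _ rfl
    rfl
  exact congrArg Subtype.val ((e (f a)).injective (h.trans (he _ hf.symm)))

/-- At an arrow whose target has an outgoing arrow, gentleness determines `T` from `S`; at the
remaining arrows `T` only has to separate the arrows with a common target. -/
lemma IsGentle.exists_isStringPair [∀ v, Finite {a // Q.src a = v}]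
    [∀ v, Finite {a // Q.tgt a = v}] (hQ : Q.IsGentle) : ∃ S T, IsStringPair Q S T := by
  obtain ⟨S, hS⟩ := exists_bool_ne_of_card_fiber_le_two Q.src hQ.out_le
  obtain ⟨T₀, hT₀⟩ := exists_bool_ne_of_card_fiber_le_two Q.tgt hQ.in_le
  have hT (a : A) : ∃ t, (∀ b, Q.src b = Q.tgt a → (Q.rel b a ↔ t = S b)) ∧
      ((∀ b, Q.src b ≠ Q.tgt a) → t = T₀ a) := by
    by_cases h : ∃ b, Q.src b = Q.tgt a
    · obtain ⟨b, hb⟩ := h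
      refine ⟨if Q.rel b a then S b else !S b, fun b' hb' => ?_, fun h => absurd hb (h b)⟩
      obtain rfl | hne := eq_or_ne b b'
      · by_cases h : Q.rel b a <;> simp [h]
      · have hSne := hS b b' hne (hb.trans hb'.symm)
        by_cases h : Q.rel b' a <;>
          simp [hQ.rel_iff_not_rel hb hb' hne, h, Bool.eq_not.2 hSne]
    · exact ⟨T₀ a, fun b hb => absurd ⟨b, hb⟩ h, fun _ => rfl⟩
  choose T hrel hT₀' using hT
  refine ⟨S, T, hS, fun a a' hne htgt hTeq => ?_, fun a b hab => hrel a b hab.symm⟩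
  by_cases h : ∃ b, Q.src b = Q.tgt a
  · obtain ⟨b, hb⟩ := h
    refine hne (hQ.eq_of_rel_iff_rel hb (hb.trans htgt) ?_)
    rw [hrel a b hb, hrel a' b (hb.trans htgt), hTeq]
  · rw [not_exists] at h
    refine hT₀ a a' hne htgt ?_
    rw [← hT₀' a h, ← hT₀' a' (htgt ▸ h), hTeq]

lemma IsStringPair.multiClock (hST : IsStringPair Q S T) (hneg : ∀ a, S a = !T a) :
    MultiClock Q := by
  intro l _ hchain hclosed hnodup
  have hsign : (fun a => S a + T a + 1) = fun _ => (0 : Bool) := by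
    funext a
    rw [hneg a]
    exact (by decide : ∀ t : Bool, (!t) + t + 1 = 0) (T a)
  have hcast : (Q.relCount l : Bool) = 0 := by
    rw [hST.natCast_relCount hchain hclosed hnodup, hsign, weight, List.sum_map_zero]
  exact even_iff_two_dvd.2 ((CharP.cast_eq_zero_iff Bool 2 _).1 hcast)

lemma MultiClock.exists_isStringPair (hMC : MultiClock Q) {u : V}
    (hwalk : ∀ v, ∃ l, Q.IsWalk u l v) (hST : IsStringPair Q S T) :
    ∃ S' T', IsStringPair Q S' T' ∧ ∀ a, S' a = !T' a := by
  obtain ⟨g, hg⟩ := exists_potential (σ := fun a => S a + T a + 1) hwalk fun l v hl hnodup => by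
    obtain rfl | hne := eq_or_ne l []
    · rfl
    · rw [← hST.natCast_relCount hl.walkChain hl.walkClosed hnodup]
      exact (CharP.cast_eq_zero_iff Bool 2 _).2
        (hMC l hne hl.walkChain hl.walkClosed hnodup).two_dvd
  refine ⟨_, _, hST.switch g, fun a => ?_⟩
  have eq_not_of_eq : ∀ s t x y : Bool, s + t + 1 = x + y → s + x = !(t + y) := by decide
  exact eq_not_of_eq _ _ _ _ (hg a)

theorem IsGentle.multiClock_iff_exists_isStringPair [∀ v, Finite {a // Q.src a = v}]
    [∀ v, Finite {a // Q.tgt a = v}] (hQ : Q.IsGentle) :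
    MultiClock Q ↔ ∃ S T, IsStringPair Q S T ∧ ∀ a, S a = !T a := by
  refine ⟨fun hMC => ?_, fun ⟨S, T, hST, hneg⟩ => hST.multiClock hneg⟩
  obtain ⟨S, T, hST⟩ := hQ.exists_isStringPair
  obtain ⟨a⟩ := hQ.has_arrow
  exact hMC.exists_isStringPair (hQ.exists_isWalk (Q.src a)) hST

end StringFunctions

/-! ### Permitted threads -/

/-- `Q.PermPair a b`: the arrows `a` and `b` form a permitted path `ab` of length two. -/
def PermPair (Q : BQuiv V A) (a b : A) : Prop :=
  Q.src a = Q.tgt b ∧ ¬ Q.rel a b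

lemma isChain_permPair_iff {l : List A} :
    l.IsChain Q.PermPair ↔ Q.PathChain l ∧ l.IsChain fun a b => ¬ Q.rel a b :=
  ⟨fun h => ⟨h.imp fun _ _ => And.left, h.imp fun _ _ => And.right⟩, fun ⟨hpath, hperm⟩ =>
    List.isChain_iff_getElem.2 fun i hi =>
      ⟨List.isChain_iff_getElem.1 hpath i hi, List.isChain_iff_getElem.1 hperm i hi⟩⟩

lemma IsGentle.eq_of_permPair_left (hQ : Q.IsGentle) {a a' b : A} (h : Q.PermPair a b)
    (h' : Q.PermPair a' b) : a = a' :=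
  hQ.unique_nonrel_post b a a' h.1 h'.1 h.2 h'.2

lemma IsGentle.eq_of_permPair_right (hQ : Q.IsGentle) {a b b' : A} (h : Q.PermPair a b)
    (h' : Q.PermPair a b') : b = b' :=
  hQ.unique_nonrel_pre a b b' h.1 h'.1 h.2 h'.2

lemma IsGentle.exists_length_lt_of_isChain_permPair (hQ : Q.IsGentle) :
    ∃ m, ∀ l : List A, l.IsChain Q.PermPair → l.length < m := by
  obtain ⟨m, -, hm⟩ := hQ.admissible
  refine ⟨m, fun l hl => lt_of_not_ge fun hlen => ?_⟩
  obtain ⟨hpath, hperm⟩ := isChain_permPair_iff.1 (hl.take m)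
  exact hm (l.take m) (List.length_take_of_le hlen) hpath hperm

lemma exists_maximal_isChain {α : Type*} {r : α → α → Prop} {m : ℕ}
    (hm : ∀ l : List α, l.IsChain r → l.length < m) (a : α) :
    ∃ l : List α, a ∈ l ∧ l.IsChain r ∧ (∀ x b, l.head? = some b → ¬ r x b) ∧
      ∀ b x, l.getLast? = some b → ¬ r b x := by
  obtain ⟨_, ⟨l, ⟨ha, hl⟩, rfl⟩, hmax⟩ :=
    BddAbove.exists_isGreatest_of_nonempty (S := List.length '' {l | a ∈ l ∧ l.IsChain r})
      ⟨m, by rintro _ ⟨l, ⟨-, hl⟩, rfl⟩; exact (hm l hl).le⟩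
      ⟨1, [a], ⟨List.mem_singleton_self a, List.isChain_singleton a⟩, rfl⟩
  refine ⟨l, ha, hl, fun x b hb hr => ?_, fun b x hb hr => ?_⟩
  · have hchain : (x :: l).IsChain r :=
      List.isChain_cons.2 ⟨fun y hy => Option.some_injective _ (hb.symm.trans hy) ▸ hr, hl⟩
    have hle := hmax ⟨x :: l, ⟨List.mem_cons_of_mem x ha, hchain⟩, rfl⟩
    rw [List.length_cons] at hle
    omega
  · have hchain : (l ++ [x]).IsChain r := by
      refine List.isChain_append.2 ⟨hl, List.isChain_singleton x, ?_⟩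
      rintro y hy z ⟨⟩
      exact Option.some_injective _ (hb.symm.trans hy) ▸ hr
    have hle := hmax ⟨l ++ [x], ⟨List.mem_append_left [x] ha, hchain⟩, rfl⟩
    rw [List.length_append, List.length_singleton] at hle
    omega

namespace PThread

variable {p q : PThread Q} {a b : A} {i j : ℕ}

lemma isChain_permPair (p : PThread Q) : p.1.arrows.IsChain Q.PermPair := by
  refine isChain_permPair_iff.2 ⟨p.1.chain, ?_⟩
  obtain ⟨-, hperm, -⟩ | ⟨hnil, -⟩ := p.2
  · exact hperm
  · rw [hnil]
    exact List.IsChain.nil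

lemma not_permPair_of_head? (hb : p.1.arrows.head? = some b) : ¬ Q.PermPair a b := by
  rintro ⟨hcomp, hrel⟩
  obtain ⟨-, -, hmax, -⟩ | ⟨hnil, -⟩ := p.2
  · exact hrel (hmax a b hb hcomp)
  · simp [hnil] at hb

lemma not_permPair_of_getLast? (ha : p.1.arrows.getLast? = some a) : ¬ Q.PermPair a b := by
  rintro ⟨hcomp, hrel⟩
  obtain ⟨-, -, -, hmax⟩ | ⟨hnil, -⟩ := p.2
  · exact hrel (hmax a b ha hcomp)
  · simp [hnil] at ha

lemma permPair_of_getElem? (hb : p.1.arrows[i]? = some b) (ha : p.1.arrows[i + 1]? = some a) :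
    Q.PermPair b a := by
  obtain ⟨hi, rfl⟩ := List.getElem?_eq_some_iff.1 ha
  obtain ⟨-, rfl⟩ := List.getElem?_eq_some_iff.1 hb
  exact List.isChain_iff_getElem.1 p.isChain_permPair i hi

lemma getElem?_succ_eq_some_iff (hQ : Q.IsGentle) (hb : p.1.arrows[i]? = some b) :
    p.1.arrows[i + 1]? = some a ↔ Q.PermPair b a := by
  refine ⟨permPair_of_getElem? hb, fun hba => ?_⟩
  cases ha : p.1.arrows[i + 1]? with
  | some a' => rw [hQ.eq_of_permPair_right hba (permPair_of_getElem? hb ha)]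
  | none =>
    have hlast : p.1.arrows.getLast? = some b := by
      have hlen : p.1.arrows.length - 1 = i := by
        have := (List.getElem?_eq_some_iff.1 hb).1
        have := List.getElem?_eq_none_iff.1 ha
        omega
      rw [List.getLast?_eq_getElem?, hlen, hb]
    exact absurd hba (not_permPair_of_getLast? hlast)

lemma getElem?_succ_eq (hQ : Q.IsGentle) (h : p.1.arrows[i]? = q.1.arrows[i]?) :
    p.1.arrows[i + 1]? = q.1.arrows[i + 1]? := by
  cases hb : p.1.arrows[i]? with
  | some b =>
    ext a
    rw [getElem?_succ_eq_some_iff hQ hb, getElem?_succ_eq_some_iff hQ (h.symm.trans hb)]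
  | none =>
    have hp := List.getElem?_eq_none_iff.1 hb
    have hq := List.getElem?_eq_none_iff.1 (h.symm.trans hb)
    rw [List.getElem?_eq_none (by omega), List.getElem?_eq_none (by omega)]

lemma index_eq_and_head_eq_of_getElem? (hQ : Q.IsGentle) (hp : p.1.arrows[i]? = some a)
    (hq : q.1.arrows[j]? = some a) : i = j ∧ p.1.arrows[0]? = q.1.arrows[0]? := by
  have exists_pred {p : PThread Q} {i : ℕ} {a : A} (h : p.1.arrows[i + 1]? = some a) :
      ∃ b, p.1.arrows[i]? = some b ∧ Q.PermPair b a := by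
    have hlt := (List.getElem?_eq_some_iff.1 h).1
    exact ⟨_, List.getElem?_eq_getElem (by omega),
      permPair_of_getElem? (List.getElem?_eq_getElem (by omega)) h⟩
  induction i generalizing j a with
  | zero =>
    cases j with
    | zero => exact ⟨rfl, hp.trans hq.symm⟩
    | succ j =>
      obtain ⟨b, -, hb⟩ := exists_pred hq
      exact absurd hb (not_permPair_of_head? (List.head?_eq_getElem?.trans hp))
  | succ i ih =>
    obtain ⟨b, hb, hba⟩ := exists_pred hp
    cases j with
    | zero => exact absurd hba (not_permPair_of_head? (List.head?_eq_getElem?.trans hq))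
    | succ j =>
      obtain ⟨b', hb', hba'⟩ := exists_pred hq
      obtain ⟨rfl, hhead⟩ := ih hb (hQ.eq_of_permPair_left hba hba' ▸ hb')
      exact ⟨rfl, hhead⟩

lemma ext_arrows (hne : p.1.arrows ≠ []) (h : p.1.arrows = q.1.arrows) : p = q := by
  obtain ⟨⟨u, l, _, hu⟩, _⟩ := p
  obtain ⟨⟨v, l', _, hv⟩, _⟩ := q
  obtain rfl : l = l' := h
  have hlast := List.getLast?_eq_some_getLast hne
  obtain rfl : u = v := (hu _ hlast).symm.trans (hv _ hlast)
  rfl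

lemma eq_and_index_eq_of_getElem? (hQ : Q.IsGentle) (hp : p.1.arrows[i]? = some a)
    (hq : q.1.arrows[j]? = some a) : p = q ∧ i = j := by
  obtain ⟨hij, hhead⟩ := index_eq_and_head_eq_of_getElem? hQ hp hq
  have hne : p.1.arrows ≠ [] := List.ne_nil_of_mem (List.mem_of_getElem? hp)
  refine ⟨ext_arrows hne (List.ext_getElem? fun k => ?_), hij⟩
  induction k with
  | zero => exact hhead
  | succ k ih => exact getElem?_succ_eq hQ ih

lemma exists_getElem? (hQ : Q.IsGentle) (a : A) :
    ∃ (p : PThread Q) (i : ℕ), p.1.arrows[i]? = some a := by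
  obtain ⟨m, hm⟩ := hQ.exists_length_lt_of_isChain_permPair
  obtain ⟨l, ha, hl, hhead, hlast⟩ := exists_maximal_isChain hm a
  obtain ⟨hpath, hperm⟩ := isChain_permPair_iff.1 hl
  have hne : l ≠ [] := List.ne_nil_of_mem ha
  let path : Path Q := ⟨Q.src (l.getLast hne), l, hpath, fun b hb => by
    rw [Option.some_injective _ ((List.getLast?_eq_some_getLast hne).symm.trans hb)]⟩
  have hthread : IsPermThread Q path := .inl ⟨hne, hperm,
    fun a b hb hcomp => not_not.1 fun h => hhead a b hb ⟨hcomp, h⟩,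
    fun a c ha hcomp => not_not.1 fun h => hlast a c ha ⟨hcomp, h⟩⟩
  obtain ⟨i, hi⟩ := List.mem_iff_getElem?.1 ha
  exact ⟨⟨path, hthread⟩, i, hi⟩

end PThread

/-! ### Split permitted threads -/

namespace PSplit

variable {x y : PSplit Q} {a b : A}

/-- The arrow `a` ends at the cut of `x = (η″, η′)`: it is the first letter of the right
factor `η′`. -/
def Enters (x : PSplit Q) (a : A) : Prop :=
  x.thread.1.arrows[x.idx]? = some a

/-- The arrow `b` starts at the cut of `x = (η″, η′)`: it is the last letter of the left
factor `η″`. -/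
def Leaves (x : PSplit Q) (b : A) : Prop :=
  ∃ i, x.idx = i + 1 ∧ x.thread.1.arrows[i]? = some b

lemma center_eq (x : PSplit Q) :
    x.center = x.thread.1.arrows[x.idx]?.elim x.thread.1.base Q.tgt :=
  congrArg (Option.elim · _ _) List.head?_drop

lemma Enters.mem (h : x.Enters a) : a ∈ x.thread.1.arrows :=
  List.mem_of_getElem? h

lemma Leaves.mem (h : x.Leaves b) : b ∈ x.thread.1.arrows := by
  obtain ⟨i, -, hi⟩ := h
  exact List.mem_of_getElem? hi

lemma Enters.tgt_eq_center (h : x.Enters a) : Q.tgt a = x.center := by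
  rw [center_eq, h]
  rfl

lemma Leaves.src_eq_center (h : x.Leaves b) : Q.src b = x.center := by
  obtain ⟨i, hidx, hi⟩ := h
  rw [center_eq, hidx]
  cases ha : x.thread.1.arrows[i + 1]? with
  | some a => exact (PThread.permPair_of_getElem? hi ha).1
  | none =>
    have hlast : x.thread.1.arrows.length - 1 = i := by
      have := (List.getElem?_eq_some_iff.1 hi).1
      have := List.getElem?_eq_none_iff.1 ha
      omega
    exact x.thread.1.base_eq b (by rw [List.getLast?_eq_getElem?, hlast, hi])

lemma center_eq_base (h : x.thread.1.arrows = []) : x.center = x.thread.1.base := by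
  rw [center_eq, h]
  rfl

protected lemma ext (hthread : x.thread = y.thread) (hidx : x.idx = y.idx) : x = y :=
  Subtype.ext (Prod.ext hthread hidx)

lemma idx_le_length (x : PSplit Q) : x.idx ≤ x.thread.1.arrows.length :=
  x.2

lemma eq_of_arrows_eq_nil (hx : x.thread.1.arrows = []) (hy : y.thread.1.arrows = [])
    (h : x.center = y.center) : x = y := by
  have idx_eq_zero {z : PSplit Q} (hz : z.thread.1.arrows = []) : z.idx = 0 :=
    Nat.le_zero.1 (by simpa only [hz, List.length_nil] using z.idx_le_length)
  rw [center_eq_base hx, center_eq_base hy] at h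
  refine PSplit.ext (Subtype.ext ?_) ((idx_eq_zero hx).trans (idx_eq_zero hy).symm)
  revert hx hy h
  obtain ⟨⟨_, _, _, _⟩, _⟩ := x.thread
  obtain ⟨⟨_, _, _, _⟩, _⟩ := y.thread
  rintro rfl rfl rfl
  rfl

lemma Enters.unique (hQ : Q.IsGentle) (hx : x.Enters a) (hy : y.Enters a) : x = y := by
  obtain ⟨hthread, hidx⟩ := PThread.eq_and_index_eq_of_getElem? hQ hx hy
  exact PSplit.ext hthread hidx

lemma Leaves.unique (hQ : Q.IsGentle) (hx : x.Leaves b) (hy : y.Leaves b) : x = y := by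
  obtain ⟨i, hxi, hi⟩ := hx
  obtain ⟨j, hyj, hj⟩ := hy
  obtain ⟨hthread, rfl⟩ := PThread.eq_and_index_eq_of_getElem? hQ hi hj
  exact PSplit.ext hthread (hxi.trans hyj.symm)

lemma Leaves.enters_iff_permPair (hQ : Q.IsGentle) (h : x.Leaves b) :
    x.Enters a ↔ Q.PermPair b a := by
  obtain ⟨i, hidx, hi⟩ := h
  rw [Enters, hidx]
  exact PThread.getElem?_succ_eq_some_iff hQ hi

lemma exists_enters_or_exists_leaves (x : PSplit Q) (h : x.thread.1.arrows ≠ []) :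
    (∃ a, x.Enters a) ∨ ∃ b, x.Leaves b := by
  have hle := x.idx_le_length
  cases hidx : x.idx with
  | zero => exact .inl ⟨_, by
      rw [Enters, hidx]; exact List.getElem?_eq_getElem (List.length_pos_iff.2 h)⟩
  | succ i => exact .inr ⟨_, i, hidx, List.getElem?_eq_getElem (by omega)⟩

lemma exists_enters_and_leaves (hQ : Q.IsGentle) (a : A) :
    ∃ x y : PSplit Q, x.thread = y.thread ∧ x.Enters a ∧ y.Leaves a := by
  obtain ⟨p, i, hi⟩ := PThread.exists_getElem? hQ a
  have hlt : i < p.1.arrows.length := (List.getElem?_eq_some_iff.1 hi).1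
  exact ⟨⟨(p, i), hlt.le⟩, ⟨(p, i + 1), hlt⟩, rfl, hi, i, rfl, hi⟩

end PSplit

/-! ### Colorings -/

/-- A `2`-coloring of the arrows that is constant along permitted paths and separates any other two
distinct ends of arrows meeting at a vertex. It is the common form of the pairs of string functions
with `S ≡ -T` and of the `2`-colorings of `△(Q, I)`. -/
structure IsArrowColoring (Q : BQuiv V A) (f : A → Bool) : Prop where
  ne_of_src_eq : ∀ a b, a ≠ b → Q.src a = Q.src b → f a ≠ f b
  ne_of_tgt_eq : ∀ a b, a ≠ b → Q.tgt a = Q.tgt b → f a ≠ f b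
  rel_iff_ne : ∀ a b, Q.tgt a = Q.src b → (Q.rel b a ↔ f a ≠ f b)

lemma isStringPair_not_iff_isArrowColoring {f : A → Bool} :
    IsStringPair Q (fun a => !f a) f ↔ IsArrowColoring Q f := by
  have not_ne_not (a b : A) : (!f a) ≠ (!f b) ↔ f a ≠ f b := Bool.not_inj_iff.not
  simp only [IsStringPair, not_ne_not, Bool.eq_not]
  exact ⟨fun ⟨hS, hT, hrel⟩ => ⟨hS, hT, hrel⟩, fun ⟨hS, hT, hrel⟩ => ⟨hS, hT, hrel⟩⟩

lemma exists_isStringPair_iff_exists_isArrowColoring :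
    (∃ S T, IsStringPair Q S T ∧ ∀ a, S a = !T a) ↔ ∃ f, IsArrowColoring Q f := by
  refine ⟨fun ⟨S, T, hST, hneg⟩ => ⟨T, ?_⟩, fun ⟨f, hf⟩ =>
    ⟨_, f, isStringPair_not_iff_isArrowColoring.2 hf, fun _ => rfl⟩⟩
  obtain rfl : S = fun a => !T a := funext hneg
  exact isStringPair_not_iff_isArrowColoring.1 hST

/-- `Q.IsThreadColoring c`: `c` is a proper `2`-coloring of the vertices of `△(Q, I)`. -/
def IsThreadColoring (Q : BQuiv V A) (c : PThread Q → Bool) : Prop :=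
  ∀ x y : PSplit Q, x ≠ y → x.center = y.center → c x.thread ≠ c y.thread

lemma IsThreadColoring.exists_isArrowColoring (hQ : Q.IsGentle) {c : PThread Q → Bool}
    (hc : Q.IsThreadColoring c) : ∃ f, IsArrowColoring Q f := by
  choose x y hxy hx hy using PSplit.exists_enters_and_leaves hQ
  have hx_inj {a b : A} (h : x a = x b) : a = b :=
    Option.some_injective _ ((hx a).symm.trans (h ▸ hx b))
  have hy_inj {a b : A} (h : y a = y b) : a = b := by
    obtain ⟨i, hi, ha⟩ := hy a
    obtain ⟨j, hj, hb⟩ := hy b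
    obtain rfl : i = j := by rw [h, hj] at hi; omega
    exact Option.some_injective _ (ha.symm.trans (h ▸ hb))
  refine ⟨fun a => c (x a).thread, fun a b hab hsrc => ?_, fun a b hab htgt => ?_,
    fun a b hcomp => ?_⟩
  · simp only [hxy]
    refine hc _ _ (mt hy_inj hab) ?_
    rw [← (hy a).src_eq_center, ← (hy b).src_eq_center, hsrc]
  · refine hc _ _ (mt hx_inj hab) ?_
    rw [← (hx a).tgt_eq_center, ← (hx b).tgt_eq_center, htgt]
  · have hcenter : (x a).center = (y b).center := by
      rw [← (hx a).tgt_eq_center, ← (hy b).src_eq_center, hcomp]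
    have henters : x a = y b ↔ Q.PermPair b a := by
      rw [← (hy b).enters_iff_permPair hQ]
      exact ⟨fun h => h ▸ hx a, fun h => (hx a).unique hQ h⟩
    rw [hxy b]
    constructor
    · exact fun hrel => hc _ _ (fun h => (henters.1 h).2 hrel) hcenter
    · intro hne
      by_contra hrel
      exact hne (congrArg (fun z => c z.thread) (henters.2 ⟨hcomp.symm, hrel⟩))

namespace PThread

variable {p : PThread Q} {a b : A}

lemma deg_base_of_arrows_eq_nil (hp : p.1.arrows = []) :
    Q.deg p.1.base = 1 ∨ (Q.deg p.1.base = 2 ∧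
      ∃ b a, Q.src b = p.1.base ∧ Q.tgt a = p.1.base ∧ ¬ Q.rel b a) := by
  obtain ⟨hne, -⟩ | ⟨-, hdeg⟩ := p.2
  · exact absurd hp hne
  · exact hdeg

variable [∀ v, Finite {a // Q.src a = v}] [∀ v, Finite {a // Q.tgt a = v}]

lemma card_fiber_base_le_one (hp : p.1.arrows = []) :
    Nat.card {a // Q.src a = p.1.base} ≤ 1 ∧ Nat.card {a // Q.tgt a = p.1.base} ≤ 1 := by
  obtain hdeg | ⟨hdeg, b, a, hb, ha, -⟩ := deg_base_of_arrows_eq_nil hp <;> rw [deg] at hdeg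
  · omega
  · have : Nonempty {b // Q.src b = p.1.base} := ⟨b, hb⟩
    have : Nonempty {a // Q.tgt a = p.1.base} := ⟨a, ha⟩
    have hout : 0 < Nat.card {b // Q.src b = p.1.base} := Nat.card_pos
    have hin : 0 < Nat.card {a // Q.tgt a = p.1.base} := Nat.card_pos
    omega

lemma eq_of_src_eq_base (hp : p.1.arrows = []) (ha : Q.src a = p.1.base)
    (hb : Q.src b = p.1.base) : a = b := by
  have := Finite.card_le_one_iff_subsingleton.1 (card_fiber_base_le_one hp).1
  exact congrArg Subtype.val (Subsingleton.elim (⟨a, ha⟩ : {a // Q.src a = p.1.base}) ⟨b, hb⟩)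

lemma eq_of_tgt_eq_base (hp : p.1.arrows = []) (ha : Q.tgt a = p.1.base)
    (hb : Q.tgt b = p.1.base) : a = b := by
  have := Finite.card_le_one_iff_subsingleton.1 (card_fiber_base_le_one hp).2
  exact congrArg Subtype.val (Subsingleton.elim (⟨a, ha⟩ : {a // Q.tgt a = p.1.base}) ⟨b, hb⟩)

lemma permPair_of_eq_base (hp : p.1.arrows = []) (hb : Q.src b = p.1.base)
    (ha : Q.tgt a = p.1.base) : Q.PermPair b a := by
  refine ⟨hb.trans ha.symm, ?_⟩
  obtain hdeg | ⟨-, b', a', hb', ha', hrel⟩ := deg_base_of_arrows_eq_nil hp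
  · have : Nonempty {b // Q.src b = p.1.base} := ⟨b, hb⟩
    have : Nonempty {a // Q.tgt a = p.1.base} := ⟨a, ha⟩
    have hout : 0 < Nat.card {b // Q.src b = p.1.base} := Nat.card_pos
    have hin : 0 < Nat.card {a // Q.tgt a = p.1.base} := Nat.card_pos
    rw [deg] at hdeg
    omega
  · rwa [eq_of_src_eq_base hp hb hb', eq_of_tgt_eq_base hp ha ha']

end PThread

namespace IsArrowColoring

variable {f : A → Bool} {p : PThread Q} {x y : PSplit Q} {a b : A}

lemma eq_of_permPair (hf : IsArrowColoring Q f) (h : Q.PermPair b a) : f a = f b :=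
  not_not.1 (mt (hf.rel_iff_ne a b h.1.symm).2 h.2)

lemma eq_of_mem_arrows (hf : IsArrowColoring Q f) (ha : a ∈ p.1.arrows) (hb : b ∈ p.1.arrows) :
    f a = f b := by
  have hchain : p.1.arrows.IsChain fun a b => f a = f b :=
    p.isChain_permPair.imp fun a b h => (hf.eq_of_permPair h).symm
  have : IsTrans A fun a b => f a = f b := ⟨fun _ _ _ => Eq.trans⟩
  have : Std.Symm fun a b => f a = f b := ⟨fun _ _ => Eq.symm⟩
  have hpairwise := List.isChain_iff_pairwise.1 hchain
  exact hpairwise.forall_of_forall (R := fun a b => f a = f b) (fun _ _ => rfl) ha hb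

lemma ne_of_enters (hQ : Q.IsGentle) (hf : IsArrowColoring Q f) (ha : x.Enters a)
    (hb : y.Enters b) (hne : x ≠ y) (h : x.center = y.center) : f a ≠ f b := by
  refine hf.ne_of_tgt_eq a b ?_ (by rw [ha.tgt_eq_center, hb.tgt_eq_center, h])
  rintro rfl
  exact hne (ha.unique hQ hb)

lemma ne_of_leaves (hQ : Q.IsGentle) (hf : IsArrowColoring Q f) (ha : x.Leaves a)
    (hb : y.Leaves b) (hne : x ≠ y) (h : x.center = y.center) : f a ≠ f b := by
  refine hf.ne_of_src_eq a b ?_ (by rw [ha.src_eq_center, hb.src_eq_center, h])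
  rintro rfl
  exact hne (ha.unique hQ hb)

lemma ne_of_enters_of_leaves (hQ : Q.IsGentle) (hf : IsArrowColoring Q f) (ha : x.Enters a)
    (hb : y.Leaves b) (hne : x ≠ y) (h : x.center = y.center) : f a ≠ f b := by
  have hcomp : Q.tgt a = Q.src b := by rw [ha.tgt_eq_center, hb.src_eq_center, h]
  rw [← hf.rel_iff_ne a b hcomp]
  by_contra hrel
  exact hne (ha.unique hQ ((hb.enters_iff_permPair hQ).2 ⟨hcomp.symm, hrel⟩))

variable [∀ v, Finite {a // Q.src a = v}] [∀ v, Finite {a // Q.tgt a = v}]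

lemma eq_of_eq_base (hf : IsArrowColoring Q f) (hp : p.1.arrows = [])
    (ha : Q.src a = p.1.base ∨ Q.tgt a = p.1.base)
    (hb : Q.src b = p.1.base ∨ Q.tgt b = p.1.base) : f a = f b := by
  obtain ha | ha := ha <;> obtain hb | hb := hb
  · rw [PThread.eq_of_src_eq_base hp ha hb]
  · exact (hf.eq_of_permPair (PThread.permPair_of_eq_base hp ha hb)).symm
  · exact hf.eq_of_permPair (PThread.permPair_of_eq_base hp hb ha)
  · rw [PThread.eq_of_tgt_eq_base hp ha hb]

/-- The arrows at the base of a trivial thread lie on the other thread through that vertex, so the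
trivial thread receives the opposite of their common color. -/
lemma exists_color (hf : IsArrowColoring Q f) (p : PThread Q) :
    ∃ k, (∀ a ∈ p.1.arrows, k = f a) ∧
      (p.1.arrows = [] → ∀ a, Q.src a = p.1.base ∨ Q.tgt a = p.1.base → k ≠ f a) := by
  have exists_const {P : A → Prop} (h : ∀ a b, P a → P b → f a = f b) :
      ∃ k, ∀ a, P a → k = f a := by
    by_cases hP : ∃ a, P a
    · obtain ⟨a, ha⟩ := hP
      exact ⟨f a, fun b hb => h a b ha hb⟩
    · exact ⟨true, fun a ha => absurd ⟨a, ha⟩ hP⟩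
  by_cases hp : p.1.arrows = []
  · obtain ⟨k, hk⟩ := exists_const fun a b => hf.eq_of_eq_base (a := a) (b := b) hp
    exact ⟨!k, by simp [hp], fun _ a ha => Bool.not_not_eq.2 (hk a ha)⟩
  · obtain ⟨k, hk⟩ := exists_const fun a b => hf.eq_of_mem_arrows (p := p) (a := a) (b := b)
    exact ⟨k, hk, fun h => absurd h hp⟩

lemma exists_isThreadColoring (hQ : Q.IsGentle) (hf : IsArrowColoring Q f) :
    ∃ c, Q.IsThreadColoring c := by
  choose c hmem hnil using hf.exists_color
  have ne_of_nil_of_ne_nil {x y : PSplit Q} (hx : x.thread.1.arrows = [])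
      (hy : y.thread.1.arrows ≠ []) (h : x.center = y.center) : c x.thread ≠ c y.thread := by
    rw [PSplit.center_eq_base hx] at h
    obtain ⟨a, ha⟩ | ⟨b, hb⟩ := y.exists_enters_or_exists_leaves hy
    · rw [hmem _ a ha.mem]
      exact hnil _ hx a (.inr (ha.tgt_eq_center.trans h.symm))
    · rw [hmem _ b hb.mem]
      exact hnil _ hx b (.inl (hb.src_eq_center.trans h.symm))
  refine ⟨c, fun x y hne h => ?_⟩
  by_cases hx : x.thread.1.arrows = [] <;> by_cases hy : y.thread.1.arrows = []
  · exact absurd (PSplit.eq_of_arrows_eq_nil hx hy h) hne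
  · exact ne_of_nil_of_ne_nil hx hy h
  · exact (ne_of_nil_of_ne_nil hy hx h.symm).symm
  obtain ⟨a, ha⟩ | ⟨a, ha⟩ := x.exists_enters_or_exists_leaves hx <;>
    obtain ⟨b, hb⟩ | ⟨b, hb⟩ := y.exists_enters_or_exists_leaves hy <;>
    rw [hmem _ a ha.mem, hmem _ b hb.mem]
  · exact hf.ne_of_enters hQ ha hb hne h
  · exact hf.ne_of_enters_of_leaves hQ ha hb hne h
  · exact (hf.ne_of_enters_of_leaves hQ hb ha hne.symm h.symm).symm
  · exact hf.ne_of_leaves hQ ha hb hne h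

end IsArrowColoring

lemma IsGentle.exists_isArrowColoring_iff_exists_isThreadColoring
    [∀ v, Finite {a // Q.src a = v}] [∀ v, Finite {a // Q.tgt a = v}] (hQ : Q.IsGentle) :
    (∃ f, IsArrowColoring Q f) ↔ ∃ c, Q.IsThreadColoring c :=
  ⟨fun ⟨_, hf⟩ => hf.exists_isThreadColoring hQ, fun ⟨_, hc⟩ => hc.exists_isArrowColoring hQ⟩

end BQuiv

theorem stmt10_general {V A : Type} (Q : BQuiv V A) [∀ v, Finite {a // Q.src a = v}]
    [∀ v, Finite {a // Q.tgt a = v}] (hQ : Q.IsGentle) :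
    (MultiClock Q ↔
      ∃ S T : A → Bool, IsStringPair Q S T ∧ ∀ a, S a = !T a) ∧
    (MultiClock Q ↔
      ∃ c : PThread Q → Bool, ∀ x y : PSplit Q, x ≠ y → x.center = y.center →
        c x.thread ≠ c y.thread) := by
  have hstring := hQ.multiClock_iff_exists_isStringPair
  exact ⟨hstring, hstring.trans <| exists_isStringPair_iff_exists_isArrowColoring.trans
    hQ.exists_isArrowColoring_iff_exists_isThreadColoring⟩

/-- Let `(Q, I)` be a gentle bound quiver with marked ribbon graph
`(G, ≤) = △(Q, I)`.  The following are equivalent: (1) `(Q, I)` satisfies the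
multi-clock condition; (2) there is a pair of string functions `S, T` with `S ≡ -T`;
(3) the underlying graph of `G` is bipartite, i.e. there is a `2`-coloring of the
permitted threads such that the two endpoints of every edge of `G` (the two split
permitted threads with a common center) lie over threads of different colors. -/
theorem stmt10 {V A : Type} [Fintype V] [Fintype A] (Q : BQuiv V A) (hQ : Q.IsGentle) :
    (MultiClock Q ↔
      ∃ S T : A → Bool, IsStringPair Q S T ∧ ∀ a, S a = !T a) ∧
    (MultiClock Q ↔
      ∃ c : PThread Q → Bool, ∀ x y : PSplit Q, x ≠ y → x.center = y.center →
        c x.thread ≠ c y.thread) := by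
  exact stmt10_general Q hQ
end

section
/- Let (Q,I) be a gentle bound quiver with Cartan matrix C. Then for every vertex i of Q: C_{ii} = 2 if some permitted path of (Q,I) self-crosses at i (i.e., passes through the vertex i twice), and C_{ii} = 1 otherwise. Moreover, if C_{ii} = 2 then C_{ij} + C_{ji} is even for every vertex j (so the Euler form x ↦ x^tr C x is Cox-regular in the basis of indecomposable projectives). -/
set_option autoImplicit false

attribute [local instance] Classical.propDecidable

namespace BQuiv

variable {V A : Type}

/-- The Cartan matrix of the gentle algebra `kQ/I`: its `(i, j)` entry is the number of
permitted paths with source `j` and target `i` (which equals `dim_k Hom(P_i, P_j)`). -/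
noncomputable def cartan (Q : BQuiv V A) : Matrix V V ℤ :=
  fun i j => (Nat.card {p : Path Q // p.Permitted ∧ p.base = j ∧ p.tgtV = i} : ℤ)

/-- The (edge-vertex) incidence matrix of the marked ribbon graph `△(Q, I)`, with edges
identified with `Q₀` (via centers) and vertices with the permitted threads (transported
along a bijection `e` with a finite index type `W`): the entry at `(i, w)` is the number
of half-edges of the edge `i` incident to the vertex `e w`, i.e. the number of split
permitted threads with center `i` lying over the thread `e w`. -/
noncomputable def dInc (Q : BQuiv V A) {W : Type} (e : W ≃ PThread Q) : Matrix V W ℤ :=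
  fun i w => (Nat.card {x : PSplit Q // x.center = i ∧ x.thread = e w} : ℤ)

end BQuiv

open BQuiv

/-!
Paths are written from right to left. Let `w = x ⋯ y` be a nontrivial permitted path from `i` to
`i`. Permitted paths have bounded length, so `w` cannot be repeated: `yx` is a relation.
As relations and permitted continuations are both unique, a permitted path `l` ending at `i` can be
extended to `wl` unless its leftmost arrow is `x`, and in that case one of `l` and `w` is a prefix
of the other.

If `u` and `v` are both closed at `i`, then `uv` is never permitted, since the relations closing up
`v` and `uv` would force `u` and `v` to have the same leftmost arrow. Hence any two closed paths at
`i` are comparable, and then equal: `C i i` is `1` or `2`.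

If `j ≠ i`, the permitted paths from `j` to `i` fall into pairs `l`, `wl`, and the proper prefixes
of `w` starting at `j`. Dually, the paths from `i` to `j` fall into pairs and the proper suffixes of
`w` ending at `j`. Cutting `w` at its passages through `j` matches these prefixes with these
suffixes, so `C i j + C j i` is even.
-/

section Chains

variable {α : Type*} {r : α → α → Prop}

theorem prefix_or_prefix_of_isChain (hr : Relator.RightUnique r) :
    ∀ {l l' : List α}, l.IsChain r → l'.IsChain r → l.head? = l'.head? → l <+: l' ∨ l' <+: l
  | [], _, _, _, _ => .inl List.nil_prefix
  | _, [], _, _, _ => .inr List.nil_prefix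
  | [a], b :: t, _, _, h => by
    obtain rfl : a = b := by simpa using h
    simp
  | a :: b :: t, [c], _, _, h => by
    obtain rfl : a = c := by simpa using h
    simp
  | a :: b :: t, a' :: b' :: t', hl, hl', h => by
    obtain rfl : a = a' := by simpa using h
    rw [List.isChain_cons_cons] at hl hl'
    have hhead : (b :: t).head? = (b' :: t').head? := congrArg some (hr hl.1 hl'.1)
    simpa only [List.prefix_cons_inj] using prefix_or_prefix_of_isChain hr hl.2 hl'.2 hhead

theorem finite_setOf_isChain_and_head?_eq (hr : Relator.RightUnique r)
    (hb : ∃ m, ∀ l : List α, l.IsChain r → l.length < m) (a : Option α) :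
    {l : List α | l.IsChain r ∧ l.head? = a}.Finite := by
  obtain ⟨m, hm⟩ := hb
  refine Set.Finite.of_finite_image (f := List.length) ((Set.finite_lt_nat m).subset ?_) ?_
  · rintro _ ⟨l, hl, rfl⟩
    exact hm l hl.1
  · intro l hl l' hl' hlen
    rcases prefix_or_prefix_of_isChain hr hl.1 hl'.1 (hl.2.trans hl'.2.symm) with h | h
    · exact h.eq_of_length hlen
    · exact (h.eq_of_length hlen.symm).symm

-- Otherwise the powers of the cycle `w` would be arbitrarily long chains.
theorem not_rel_getLast_head_of_isChain (hb : ∃ m, ∀ l : List α, l.IsChain r → l.length < m)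
    {w : List α} (hw : w ≠ []) (hc : w.IsChain r) : ¬ r (w.getLast hw) (w.head hw) := by
  intro hcycle
  obtain ⟨m, hm⟩ := hb
  have hpow : (List.replicate m w).flatten.IsChain r := by
    rw [List.isChain_flatten fun h => hw (List.eq_of_mem_replicate h).symm]
    refine ⟨fun l hl => List.eq_of_mem_replicate hl ▸ hc, List.isChain_replicate_of_rel m ?_⟩
    rw [List.getLast?_eq_some_getLast hw, List.head?_eq_some_head hw]
    rintro _ ⟨⟩ _ ⟨⟩
    exact hcycle
  have hlt : m * w.length < m := by simpa using hm _ hpow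
  exact (Nat.le_mul_of_pos_right m (List.length_pos_iff.2 hw)).not_gt hlt

theorem ncard_setOf_reverse (p : List α → Prop) :
    {l : List α | p l.reverse}.ncard = {l | p l}.ncard :=
  Set.ncard_preimage_of_injective_subset_range (s := {l | p l}) List.reverse_injective
    (by simp [List.reverse_surjective.range_eq])

end Chains

namespace BQuiv

variable {V A : Type} {Q : BQuiv V A} {i j k : V} {l u v w : List A}

/-- The length-two path `ab` exists and is permitted. -/
def PermittedPair (Q : BQuiv V A) (a b : A) : Prop :=
  Q.src a = Q.tgt b ∧ ¬ Q.rel a b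

/-- `l` is the list of arrows of a nontrivial permitted path with source `j` and target `i`; as for
the entries of `cartan`, the target comes first. -/
structure IsWord (Q : BQuiv V A) (i j : V) (l : List A) : Prop where
  ne_nil : l ≠ []
  isChain : l.IsChain Q.PermittedPair
  tgt_head : Q.tgt (l.head ne_nil) = i
  src_getLast : Q.src (l.getLast ne_nil) = j

/-- The opposite bound quiver, in which all arrows are reversed. -/
def op (Q : BQuiv V A) : BQuiv V A where
  src := Q.tgt
  tgt := Q.src
  rel a b := Q.rel b a

/-- The part of gentleness that governs how a path `⋯ab` can be continued beyond its source: for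
every arrow `a` there is at most one `b` with `ab` permitted and at most one `b` with `ab` a
relation, and permitted paths have bounded length. For `Q.op` it governs the continuation of paths
beyond their target. -/
structure IsRightGentle (Q : BQuiv V A) : Prop where
  rightUnique_permittedPair : Relator.RightUnique Q.PermittedPair
  rightUnique_rel : Relator.RightUnique Q.rel
  exists_length_lt : ∃ m, ∀ l : List A, l.IsChain Q.PermittedPair → l.length < m

/-- The path `p` passes through the vertex `i` at two different positions. -/
def Path.SelfCrosses (p : Path Q) (i : V) : Prop :=
  ∃ n m : ℕ, n ≤ p.arrows.length ∧ m ≤ p.arrows.length ∧ n ≠ m ∧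
    p.vertexAt n = i ∧ p.vertexAt m = i

theorem isChain_permittedPair_iff : l.IsChain Q.PermittedPair ↔
    l.IsChain (fun a b => Q.src a = Q.tgt b) ∧ l.IsChain (fun a b => ¬ Q.rel a b) := by
  induction l with
  | nil => simp
  | cons a t ih => grind [List.isChain_cons, PermittedPair]

theorem isWord_append_iff (hu : u ≠ []) (hv : v ≠ []) : Q.IsWord i k (u ++ v) ↔
    ∃ j, Q.IsWord i j u ∧ Q.IsWord j k v ∧ ¬ Q.rel (u.getLast hu) (v.head hv) := by
  have hjoin : (∀ a ∈ u.getLast?, ∀ b ∈ v.head?, Q.PermittedPair a b) ↔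
      Q.PermittedPair (u.getLast hu) (v.head hv) := by
    simp [List.getLast?_eq_some_getLast hu, List.head?_eq_some_head hv]
  constructor
  · rintro ⟨_, hc, htgt, hsrc⟩
    rw [List.isChain_append, hjoin] at hc
    rw [List.head_append_of_ne_nil hu] at htgt
    rw [List.getLast_append_of_ne_nil _ hv] at hsrc
    obtain ⟨hcu, hcv, hcomp, hrel⟩ := hc
    exact ⟨_, ⟨hu, hcu, htgt, hcomp⟩, ⟨hv, hcv, rfl, hsrc⟩, hrel⟩
  · rintro ⟨j, hwu, hwv, hrel⟩
    refine ⟨List.append_ne_nil_of_left_ne_nil hu v, ?_, ?_, ?_⟩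
    · exact List.isChain_append.2 ⟨hwu.isChain, hwv.isChain,
        hjoin.2 ⟨hwu.src_getLast.trans hwv.tgt_head.symm, hrel⟩⟩
    · rw [List.head_append_of_ne_nil hu, hwu.tgt_head]
    · rw [List.getLast_append_of_ne_nil _ hv, hwv.src_getLast]

theorem IsWord.target_unique (h : Q.IsWord i j l) (h' : Q.IsWord k j l) : i = k :=
  h.tgt_head.symm.trans h'.tgt_head

theorem IsWord.source_unique (h : Q.IsWord i j l) (h' : Q.IsWord i k l) : j = k :=
  h.src_getLast.symm.trans h'.src_getLast

/-! ### Closed permitted paths -/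

theorem IsRightGentle.rel_getLast_head (hQ : Q.IsRightGentle) (hw : Q.IsWord i i w) :
    Q.rel (w.getLast hw.ne_nil) (w.head hw.ne_nil) := by
  by_contra h
  exact not_rel_getLast_head_of_isChain hQ.exists_length_lt hw.ne_nil hw.isChain
    ⟨hw.src_getLast.trans hw.tgt_head.symm, h⟩

theorem IsRightGentle.isWord_append_iff_head_ne (hQ : Q.IsRightGentle) (hw : Q.IsWord i i w)
    (hl : Q.IsWord i j l) :
    Q.IsWord i j (w ++ l) ↔ l.head hl.ne_nil ≠ w.head hw.ne_nil := by
  have hrel := hQ.rel_getLast_head hw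
  rw [isWord_append_iff hw.ne_nil hl.ne_nil]
  constructor
  · rintro ⟨_, -, -, hnot⟩ heq
    exact hnot (heq ▸ hrel)
  · exact fun hne => ⟨i, hw, hl, fun h => hne (hQ.rightUnique_rel h hrel)⟩

theorem IsRightGentle.not_isWord_append_iff_prefix (hQ : Q.IsRightGentle) (hw : Q.IsWord i i w)
    (hl : Q.IsWord i j l) : ¬ Q.IsWord i j (w ++ l) ↔ l <+: w ∨ w <+: l := by
  rw [hQ.isWord_append_iff_head_ne hw hl, not_not]
  constructor
  · intro h
    refine prefix_or_prefix_of_isChain hQ.rightUnique_permittedPair hl.isChain hw.isChain ?_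
    rw [List.head?_eq_some_head hl.ne_nil, List.head?_eq_some_head hw.ne_nil, h]
  · rintro (h | h)
    · exact h.head hl.ne_nil
    · exact (h.head hw.ne_nil).symm

theorem IsRightGentle.not_isWord_append_of_closed (hQ : Q.IsRightGentle) (hu : Q.IsWord i i u)
    (hv : Q.IsWord i i v) : ¬ Q.IsWord i i (u ++ v) := by
  intro huv
  have hv_u : Q.rel (v.getLast hv.ne_nil) (u.head hu.ne_nil) := by
    simpa [hu.ne_nil, hv.ne_nil] using hQ.rel_getLast_head huv
  exact (hQ.isWord_append_iff_head_ne hu hv).1 huv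
    (hQ.rightUnique_rel (hQ.rel_getLast_head hv) hv_u)

theorem IsRightGentle.eq_of_prefix_of_closed (hQ : Q.IsRightGentle) (hu : Q.IsWord i i u)
    (hw : Q.IsWord i i w) (h : u <+: w) : u = w := by
  obtain ⟨v, rfl⟩ := h
  by_contra hne
  have hv : v ≠ [] := fun hv => hne (by simp [hv])
  obtain ⟨_, hu', hvw, -⟩ := (isWord_append_iff hu.ne_nil hv).1 hw
  obtain rfl := hu.source_unique hu'
  exact hQ.not_isWord_append_of_closed hu hvw hw

theorem IsRightGentle.subsingleton_setOf_isWord (hQ : Q.IsRightGentle) (i : V) :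
    {w | Q.IsWord i i w}.Subsingleton := by
  intro u hu w hw
  rcases (hQ.not_isWord_append_iff_prefix hw hu).1 (hQ.not_isWord_append_of_closed hw hu)
    with h | h
  · exact hQ.eq_of_prefix_of_closed hu hw h
  · exact (hQ.eq_of_prefix_of_closed hw hu h).symm

/-! ### Counting paths that end on a closed path -/

theorem setOf_isWord_and_prefix_eq_image (hw : Q.IsWord i i w) (hij : i ≠ j) :
    {l | Q.IsWord i j l ∧ w <+: l} =
      (w ++ ·) '' {l | Q.IsWord i j l ∧ Q.IsWord i j (w ++ l)} := by
  ext l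
  constructor
  · rintro ⟨hl, v, rfl⟩
    have hv : v ≠ [] := by
      rintro rfl
      rw [List.append_nil] at hl
      exact hij (hw.source_unique hl)
    obtain ⟨_, hw', hvw, -⟩ := (isWord_append_iff hw.ne_nil hv).1 hl
    obtain rfl := hw.source_unique hw'
    exact ⟨v, ⟨hvw, hl⟩, rfl⟩
  · rintro ⟨v, ⟨-, hwv⟩, rfl⟩
    exact ⟨hwv, List.prefix_append w v⟩

theorem IsRightGentle.finite_setOf_isWord_append (hQ : Q.IsRightGentle) (hw : Q.IsWord i i w)
    (j : V) : {l | Q.IsWord i j l ∧ Q.IsWord i j (w ++ l)}.Finite := by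
  refine Set.Finite.of_finite_image (f := (w ++ ·)) ?_ (List.append_right_injective w).injOn
  refine (finite_setOf_isChain_and_head?_eq hQ.rightUnique_permittedPair hQ.exists_length_lt
    w.head?).subset ?_
  rintro _ ⟨l, ⟨-, hwl⟩, rfl⟩
  exact ⟨hwl.isChain, List.head?_append_of_ne_nil _ hw.ne_nil⟩

theorem IsRightGentle.ncard_setOf_isWord (hQ : Q.IsRightGentle) (hw : Q.IsWord i i w)
    (hij : i ≠ j) : {l | Q.IsWord i j l}.ncard =
      2 * {l | Q.IsWord i j l ∧ Q.IsWord i j (w ++ l)}.ncard +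
        {l | Q.IsWord i j l ∧ l <+: w}.ncard := by
  set E := {l | Q.IsWord i j l ∧ Q.IsWord i j (w ++ l)}
  set P := {l | Q.IsWord i j l ∧ l <+: w}
  have hE : E.Finite := hQ.finite_setOf_isWord_append hw j
  have hP : P.Finite :=
    (List.finite_toSet w.inits).subset fun l hl => (List.mem_inits l w).2 hl.2
  have hcover : {l | Q.IsWord i j l} = (E ∪ {l | Q.IsWord i j l ∧ w <+: l}) ∪ P := by
    ext l
    have htrichotomy := hQ.not_isWord_append_iff_prefix hw (l := l) (j := j)
    simp only [E, P, Set.mem_union, Set.mem_ofPred_eq]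
    tauto
  have hE_append : Disjoint E ((w ++ ·) '' E) := by
    rw [← setOf_isWord_and_prefix_eq_image hw hij, Set.disjoint_left]
    exact fun l hl hl' => (hQ.not_isWord_append_iff_prefix hw hl.1).2 (.inr hl'.2) hl.2
  have hP_disjoint : Disjoint (E ∪ (w ++ ·) '' E) P := by
    rw [← setOf_isWord_and_prefix_eq_image hw hij, Set.disjoint_union_left, Set.disjoint_left,
      Set.disjoint_left]
    refine ⟨fun l hl hl' => (hQ.not_isWord_append_iff_prefix hw hl.1).2 (.inl hl'.2) hl.2, ?_⟩
    rintro l ⟨hl, hwl⟩ ⟨-, hlw⟩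
    obtain rfl := hwl.eq_of_length_le hlw.length_le
    exact hij (hw.source_unique hl)
  rw [hcover, setOf_isWord_and_prefix_eq_image hw hij,
    Set.ncard_union_eq hP_disjoint (hE.union (hE.image _)) hP,
    Set.ncard_union_eq hE_append hE (hE.image _),
    Set.ncard_image_of_injective _ (List.append_right_injective w), two_mul]

-- Both sides count the interior passages of the closed path `w` through `j`.
theorem ncard_setOf_isWord_and_prefix_eq (hw : Q.IsWord i i w) (hij : i ≠ j) :
    {l | Q.IsWord i j l ∧ l <+: w}.ncard = {l | Q.IsWord j i l ∧ l <:+ w}.ncard := by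
  refine Set.ncard_congr (fun u _ => w.drop u.length) ?_ ?_ ?_
  · rintro u ⟨hu, v, rfl⟩
    have hv : v ≠ [] := by
      rintro rfl
      rw [List.append_nil] at hw
      exact hij (hw.source_unique hu)
    obtain ⟨_, hu', hvw, -⟩ := (isWord_append_iff hu.ne_nil hv).1 hw
    obtain rfl := hu.source_unique hu'
    simpa using hvw
  · rintro u u' ⟨-, hu⟩ ⟨-, hu'⟩ hdrop
    have hlen := congrArg List.length hdrop
    simp only [List.length_drop] at hlen
    have hu_le := hu.length_le
    have hu'_le := hu'.length_le
    exact (List.prefix_of_prefix_length_le hu hu' (by lia)).eq_of_length (by lia)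
  · rintro v ⟨hv, u, rfl⟩
    have hu : u ≠ [] := by
      rintro rfl
      rw [List.nil_append] at hw
      exact hij (hw.target_unique hv)
    obtain ⟨_, hu', hv', -⟩ := (isWord_append_iff hu hv.ne_nil).1 hw
    obtain rfl := hv.target_unique hv'
    exact ⟨u, ⟨hu', List.prefix_append u v⟩, List.drop_left⟩

/-! ### The opposite quiver -/

theorem isChain_op_reverse_iff :
    l.reverse.IsChain Q.op.PermittedPair ↔ l.IsChain Q.PermittedPair := by
  have hpair : (fun a b => Q.op.PermittedPair b a) = Q.PermittedPair := by
    ext a b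
    simp only [PermittedPair, op, eq_comm]
  rw [List.isChain_reverse, hpair]

theorem isWord_op_reverse_iff : Q.op.IsWord j i l.reverse ↔ Q.IsWord i j l := by
  constructor
  · rintro ⟨hne, hc, htgt, hsrc⟩
    exact ⟨by simpa using hne, isChain_op_reverse_iff.1 hc, by simpa [op] using hsrc,
      by simpa [op] using htgt⟩
  · rintro ⟨hne, hc, htgt, hsrc⟩
    exact ⟨by simpa using hne, isChain_op_reverse_iff.2 hc, by simpa [op] using hsrc,
      by simpa [op] using htgt⟩

theorem ncard_setOf_isWord_op (i j : V) :
    {l | Q.op.IsWord j i l}.ncard = {l | Q.IsWord i j l}.ncard := by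
  simp only [← ncard_setOf_reverse (Q.op.IsWord j i), isWord_op_reverse_iff]

theorem ncard_setOf_isWord_op_and_prefix (i j : V) (w : List A) :
    {l | Q.op.IsWord j i l ∧ l <+: w.reverse}.ncard = {l | Q.IsWord i j l ∧ l <:+ w}.ncard := by
  simp only [← ncard_setOf_reverse fun l => Q.op.IsWord j i l ∧ l <+: w.reverse,
    isWord_op_reverse_iff, List.reverse_prefix]

theorem even_ncard_setOf_isWord_add (hQ : Q.IsRightGentle) (hQop : Q.op.IsRightGentle)
    (hw : Q.IsWord i i w) (hij : i ≠ j) :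
    Even ({l | Q.IsWord i j l}.ncard + {l | Q.IsWord j i l}.ncard) := by
  rw [hQ.ncard_setOf_isWord hw hij, ← ncard_setOf_isWord_op j i,
    hQop.ncard_setOf_isWord (isWord_op_reverse_iff.2 hw) hij,
    ncard_setOf_isWord_op_and_prefix, ncard_setOf_isWord_and_prefix_eq hw hij,
    add_add_add_comm]
  exact ((even_two_mul _).add (even_two_mul _)).add (Even.add_self _)

theorem IsGentle.exists_length_lt (hQ : Q.IsGentle) :
    ∃ m, ∀ l : List A, l.IsChain Q.PermittedPair → l.length < m := by
  obtain ⟨m, -, hm⟩ := hQ.admissible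
  refine ⟨m, fun l hl => ?_⟩
  by_contra! hle
  obtain ⟨hcomp, hperm⟩ := isChain_permittedPair_iff.1 (hl.take m)
  exact hm (l.take m) (by simp [hle]) hcomp hperm

theorem IsGentle.isRightGentle (hQ : Q.IsGentle) : Q.IsRightGentle where
  rightUnique_permittedPair a b c hb hc := hQ.unique_nonrel_pre a b c hb.1 hc.1 hb.2 hc.2
  rightUnique_rel a b c hb hc := hQ.unique_rel_pre a b c hb hc
  exists_length_lt := hQ.exists_length_lt

theorem IsGentle.isRightGentle_op (hQ : Q.IsGentle) : Q.op.IsRightGentle where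
  rightUnique_permittedPair a b c hb hc :=
    hQ.unique_nonrel_post a b c hb.1.symm hc.1.symm hb.2 hc.2
  rightUnique_rel a b c hb hc := hQ.unique_rel_post a b c hb hc
  exists_length_lt := by
    obtain ⟨m, hm⟩ := hQ.exists_length_lt
    refine ⟨m, fun l hl => ?_⟩
    rw [← List.reverse_reverse l, isChain_op_reverse_iff] at hl
    simpa using hm _ hl

/-! ### From words to the Cartan matrix -/

theorem image_arrows_setOf_permitted (Q : BQuiv V A) (i j : V) :
    Path.arrows '' {p : Path Q | p.Permitted ∧ p.base = j ∧ p.tgtV = i} =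
      {l | l = [] ∧ i = j} ∪ {l | Q.IsWord i j l} := by
  ext l
  constructor
  · rintro ⟨⟨j, l, hc, hbase⟩, ⟨hp, rfl, rfl⟩, rfl⟩
    rcases eq_or_ne l [] with rfl | hl
    · exact .inl ⟨rfl, rfl⟩
    · exact .inr ⟨hl, isChain_permittedPair_iff.2 ⟨hc, hp⟩,
        by simp [Path.tgtV, List.head?_eq_some_head hl],
        hbase _ (List.getLast?_eq_some_getLast hl)⟩
  · rintro (⟨rfl, rfl⟩ | hl)
    · exact ⟨⟨i, [], .nil, by simp⟩, ⟨.nil, rfl, rfl⟩, rfl⟩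
    · obtain ⟨hc, hp⟩ := isChain_permittedPair_iff.1 hl.isChain
      refine ⟨⟨j, l, hc, ?_⟩, ⟨hp, rfl, ?_⟩, rfl⟩
      · simpa [List.getLast?_eq_some_getLast hl.ne_nil] using hl.src_getLast
      · simpa [Path.tgtV, List.head?_eq_some_head hl.ne_nil] using hl.tgt_head

theorem cartan_eq_ncard (Q : BQuiv V A) (i j : V) :
    cartan Q i j = (({l | l = [] ∧ i = j} ∪ {l | Q.IsWord i j l}).ncard : ℤ) := by
  rw [← image_arrows_setOf_permitted, Set.InjOn.ncard_image]
  · rfl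
  · rintro ⟨_, _, _, _⟩ ⟨-, rfl, -⟩ ⟨_, _, _, _⟩ ⟨-, hbase, -⟩ rfl
    cases hbase
    rfl

theorem cartan_of_ne (h : i ≠ j) : cartan Q i j = ({l | Q.IsWord i j l}.ncard : ℤ) := by
  simp [cartan_eq_ncard, h]

theorem cartan_self (h : {l | Q.IsWord i i l}.Finite) :
    cartan Q i i = ({l | Q.IsWord i i l}.ncard : ℤ) + 1 := by
  have hnil : [] ∉ {l | Q.IsWord i i l} := fun hl => hl.ne_nil rfl
  have hunion : {l | l = [] ∧ i = i} ∪ {l | Q.IsWord i i l} = insert [] {l | Q.IsWord i i l} := by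
    simp [Set.insert_def]
  rw [cartan_eq_ncard, hunion, Set.ncard_insert_of_notMem hnil h, Nat.cast_succ]

theorem Path.Permitted.isWord_drop {p : Path Q} (hp : p.Permitted) {n : ℕ}
    (hn : n < p.arrows.length) : Q.IsWord (p.vertexAt n) p.base (p.arrows.drop n) := by
  have hne : p.arrows.drop n ≠ [] := by simpa using hn
  refine ⟨hne, (isChain_permittedPair_iff.2 ⟨p.chain, hp⟩).drop n, ?_, ?_⟩
  · simp [Path.vertexAt, List.head?_eq_some_head hne]
  · refine p.base_eq _ ?_
    rw [List.getLast_drop, List.getLast?_eq_some_getLast]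

theorem Path.Permitted.isWord_take_drop {p : Path Q} (hp : p.Permitted) {n m : ℕ} (hnm : n < m)
    (hm : m ≤ p.arrows.length) :
    Q.IsWord (p.vertexAt n) (p.vertexAt m) ((p.arrows.drop n).take (m - n)) := by
  have hdrop := hp.isWord_drop (hnm.trans_le hm)
  rcases hm.eq_or_lt with rfl | hm
  · rw [List.take_of_length_le List.length_drop.le]
    simpa [Path.vertexAt] using hdrop
  · have hsplit : (p.arrows.drop n).take (m - n) ++ p.arrows.drop m = p.arrows.drop n := by
      conv_rhs => rw [← List.take_append_drop (m - n) (p.arrows.drop n), List.drop_drop,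
        Nat.add_sub_cancel' hnm.le]
    have htake : (p.arrows.drop n).take (m - n) ≠ [] :=
      List.ne_nil_of_length_pos (by simp only [List.length_take, List.length_drop]; lia)
    have hdrop' := hp.isWord_drop hm
    rw [← hsplit] at hdrop
    obtain ⟨_, hleft, hright, -⟩ := (isWord_append_iff htake hdrop'.ne_nil).1 hdrop
    obtain rfl := hright.target_unique hdrop'
    exact hleft

theorem exists_selfCrosses_iff :
    (∃ p : Path Q, p.Permitted ∧ p.SelfCrosses i) ↔ ∃ w, Q.IsWord i i w := by
  constructor
  · rintro ⟨p, hp, n, m, hn, hm, hne, rfl, hmi⟩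
    rcases hne.lt_or_gt with h | h
    · exact ⟨_, hmi ▸ hp.isWord_take_drop h hm⟩
    · exact ⟨_, hmi ▸ hp.isWord_take_drop h hn⟩
  · rintro ⟨w, hw⟩
    obtain ⟨hc, hp⟩ := isChain_permittedPair_iff.1 hw.isChain
    refine ⟨⟨i, w, hc, ?_⟩, hp, 0, w.length, Nat.zero_le _, le_rfl, ?_, ?_, ?_⟩
    · simpa [List.getLast?_eq_some_getLast hw.ne_nil] using hw.src_getLast
    · exact (List.length_pos_iff.2 hw.ne_nil).ne
    · simpa [Path.vertexAt, List.head?_eq_some_head hw.ne_nil] using hw.tgt_head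
    · simp [Path.vertexAt]

theorem IsRightGentle.cartan_self_eq_ite (hQ : Q.IsRightGentle) (i : V) :
    cartan Q i i = if ∃ w, Q.IsWord i i w then 2 else 1 := by
  have hsub := hQ.subsingleton_setOf_isWord i
  rw [cartan_self hsub.finite]
  split_ifs with h
  · obtain ⟨w, hw⟩ := h
    rw [hsub.eq_singleton_of_mem hw, Set.ncard_singleton]
    rfl
  · have hempty : {l | Q.IsWord i i l} = ∅ := by simpa [Set.eq_empty_iff_forall_notMem] using h
    simp [hempty]

theorem even_cartan_add_cartan (hQ : Q.IsRightGentle) (hQop : Q.op.IsRightGentle)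
    (hw : Q.IsWord i i w) (j : V) : Even (cartan Q i j + cartan Q j i) := by
  rcases eq_or_ne i j with rfl | hij
  · exact ⟨_, rfl⟩
  · rw [cartan_of_ne hij, cartan_of_ne hij.symm]
    exact_mod_cast even_ncard_setOf_isWord_add hQ hQop hw hij

end BQuiv

theorem stmt12_general {V A : Type} {Q : BQuiv V A} (hQ : Q.IsRightGentle)
    (hQop : Q.op.IsRightGentle) :
    (∀ i : V,
      ((∃ p : BQuiv.Path Q, p.Permitted ∧ p.SelfCrosses i) → cartan Q i i = 2) ∧
      ((¬ ∃ p : BQuiv.Path Q, p.Permitted ∧ p.SelfCrosses i) → cartan Q i i = 1)) ∧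
    (∀ i j : V, cartan Q i i = 2 → Even (cartan Q i j + cartan Q j i)) := by
  simp only [exists_selfCrosses_iff, hQ.cartan_self_eq_ite]
  refine ⟨fun i => ⟨fun h => if_pos h, fun h => if_neg h⟩, fun i j h => ?_⟩
  obtain ⟨w, hw⟩ : ∃ w, Q.IsWord i i w := by
    by_contra hno
    simp [hno] at h
  exact even_cartan_add_cartan hQ hQop hw j

/-- Let `(Q, I)` be a gentle bound quiver with Cartan matrix `C`.
Then for every vertex `i`: `C_{ii} = 2` if some permitted path of `(Q, I)` self-crosses
at `i` (passes through `i` twice), and `C_{ii} = 1` otherwise.  Moreover, if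
`C_{ii} = 2` then `C_{ij} + C_{ji}` is even for every vertex `j` (so the Euler form
`x ↦ xᵀ C x` is Cox-regular in the basis of indecomposable projectives). -/
theorem stmt12 {V A : Type} [Fintype V] [Fintype A] (Q : BQuiv V A) (hQ : Q.IsGentle) :
    (∀ i : V,
      ((∃ p : BQuiv.Path Q, p.Permitted ∧ ∃ n m : ℕ, n ≤ p.arrows.length ∧
          m ≤ p.arrows.length ∧ n ≠ m ∧ p.vertexAt n = i ∧ p.vertexAt m = i) →
        cartan Q i i = 2) ∧
      ((¬ ∃ p : BQuiv.Path Q, p.Permitted ∧ ∃ n m : ℕ, n ≤ p.arrows.length ∧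
          m ≤ p.arrows.length ∧ n ≠ m ∧ p.vertexAt n = i ∧ p.vertexAt m = i) →
        cartan Q i i = 1)) ∧
    (∀ i j : V, cartan Q i i = 2 → Even (cartan Q i j + cartan Q j i)) :=
  stmt12_general hQ.isRightGentle hQ.isRightGentle_op
end

section
/- Let (Q,I) be a gentle bound quiver containing no full cycle (equivalently, such that the gentle algebra kQ/I has finite global dimension), with Cartan matrix C and forbidden marked ribbon graph ▲(Q,I) = (Ḡ,≤̄,σ̄). Then C is invertible over ℤ (det C = ±1) and C^{-1} + C^{-tr} = Inc(Ḡ,σ̄)·Inc(Ḡ,σ̄)^tr. -/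
set_option autoImplicit false

attribute [local instance] Classical.propDecidable

namespace BQuiv

variable {V A : Type}

/-- A full cycle: a non-trivial closed forbidden path without repeated arrows whose
wrap-around length-two subpath is again a relation. -/
def IsFullCycle (Q : BQuiv V A) (p : Path Q) : Prop :=
  p.arrows ≠ [] ∧ p.Forbidden ∧ p.tgtV = p.base ∧ p.arrows.Nodup ∧
  ∀ a b, p.arrows.getLast? = some a → p.arrows.head? = some b → Q.rel a b

/-- The type of forbidden threads of `(Q, I)`: the vertices of the forbidden marked
ribbon graph `▲(Q, I)`. -/
def FThread (Q : BQuiv V A) : Type := {p : Path Q // IsForbThread Q p}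

/-- The type of split forbidden threads of `(Q, I)`: the half-edges of `▲(Q, I)`. -/
def FSplit (Q : BQuiv V A) : Type := {x : FThread Q × ℕ // x.2 ≤ x.1.1.arrows.length}

/-- The forbidden thread over which a split forbidden thread lies. -/
def FSplit.thread {Q : BQuiv V A} (x : FSplit Q) : FThread Q := x.1.1

/-- The center of a split forbidden thread, realizing the bijection between the edges
of `▲(Q, I)` and the vertices of `Q`. -/
def FSplit.center {Q : BQuiv V A} (x : FSplit Q) : V := x.1.1.1.vertexAt x.1.2

/-- The sign `σ̄` of a split forbidden thread `h̄^θ_t`, namely `(-1) ^ (ℓ^θ - t)`,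
is positive precisely when `ℓ^θ - t` is even. -/
def FSplit.posSign {Q : BQuiv V A} (x : FSplit Q) : Prop :=
  Even (x.1.1.1.arrows.length - x.1.2)

/-- The incidence matrix `Inc(Ḡ, σ̄)` of the bidirected forbidden marked ribbon graph
`▲(Q, I)`: edges are identified with `Q₀` via centers, vertices with the forbidden
threads (transported along a bijection `e` with a finite index type `W`), and each
half-edge (split forbidden thread) contributes its sign `σ̄`. -/
noncomputable def fInc (Q : BQuiv V A) {W : Type} (e : W ≃ FThread Q) : Matrix V W ℤ :=
  fun i w =>
    (Nat.card {x : FSplit Q // x.center = i ∧ x.thread = e w ∧ x.posSign} : ℤ) -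
    (Nat.card {x : FSplit Q // x.center = i ∧ x.thread = e w ∧ ¬ x.posSign} : ℤ)

end BQuiv

open BQuiv
open scoped Matrix

/-!
Let `S` and `T` be the source and target incidence matrices, and let `N` and `R` be the matrices of
the composable pairs of arrows outside and inside the set of relations, so that `S T = N + R`.
Counting permitted paths by their last arrow gives `C = 1 + T (1 - N)⁻¹ S`, and the Woodbury
identity inverts this to `C⁻¹ = 1 - T (1 + R)⁻¹ S`; here `1 - N` is invertible by admissibility and
`1 + R` because there is no full cycle.

A forbidden thread is determined by its last arrow on the source side, an arrow that starts no
relation, and the alternating sum of the vertices it visits telescopes: the column of `Inc` at that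
thread is the corresponding column of `Sᵀ - T (1 + R)⁻¹`. As `1 - R Rᵀ` is the indicator of the
arrows that start no relation,
`Inc Incᵀ = (Sᵀ - T (1 + R)⁻¹) (1 - R Rᵀ) (Sᵀ - T (1 + R)⁻¹)ᵀ + E`,
where `E` is the indicator of the trivial forbidden threads. Expanding, the terms other than
`-T (1 + R)⁻¹ S` and its transpose form a diagonal matrix whose entries count arrows and trivial
threads at a vertex, and gentleness makes each of them equal to `2`.
-/

section Chains

variable {α : Type*} {r : α → α → Prop}

theorem exists_cycle_of_isChain_of_not_nodup {l : List α} (hl : l.IsChain r) (hd : ¬ l.Nodup) :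
    ∃ (a : α) (s : List α), (a :: s).Nodup ∧ (a :: s).IsChain r ∧
      ∀ b ∈ (a :: s).getLast?, r b a := by
  induction l with
  | nil => simp at hd
  | cons a t ih =>
    by_cases ht : t.Nodup
    · have ha : a ∈ t := by simpa [ht] using hd
      obtain ⟨s, u, rfl⟩ := List.append_of_mem ha
      have hs := List.nodup_append.1 ht
      have hsplit : ((a :: s) ++ (a :: u)).IsChain r := hl
      refine ⟨a, s, List.nodup_cons.2 ⟨fun h => hs.2.2 a h a (by simp) rfl, hs.1⟩,
        hsplit.left_of_append, fun b hb => ?_⟩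
      exact (List.isChain_append.1 hsplit).2.2 b hb a (by simp)
    · exact ih hl.tail ht

theorem eq_of_isChain_of_getLast?_eq (hr : Relator.LeftUnique r) {l l' : List α}
    (hl : l.IsChain r) (hl' : l'.IsChain r) (hmax : ∀ b ∈ l.head?, ∀ a, ¬ r a b)
    (hmax' : ∀ b ∈ l'.head?, ∀ a, ¬ r a b) (hlast : l.getLast? = l'.getLast?) : l = l' := by
  induction l using List.reverseRecOn generalizing l' with
  | nil => simpa [eq_comm] using hlast
  | append_singleton l a ih =>
    obtain ⟨k, rfl⟩ : ∃ k, l' = k ++ [a] := by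
      rcases List.eq_nil_or_concat' l' with rfl | ⟨k, b, rfl⟩
      · simp at hlast
      · exact ⟨k, by simpa [eq_comm] using hlast⟩
    rw [List.isChain_append] at hl hl'
    have hpred : l.getLast? = k.getLast? := by
      rcases List.eq_nil_or_concat' l with rfl | ⟨l, b, rfl⟩ <;>
        rcases List.eq_nil_or_concat' k with rfl | ⟨k, c, rfl⟩
      · rfl
      · exact absurd (hl'.2.2 c (by simp) a (by simp)) (hmax a (by simp) c)
      · exact absurd (hl.2.2 b (by simp) a (by simp)) (hmax' a (by simp) b)
      · simpa using hr (hl.2.2 b (by simp) a (by simp)) (hl'.2.2 c (by simp) a (by simp))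
    rw [ih hl.1 hl'.1 (fun b hb => hmax b (by simp_all)) (fun b hb => hmax' b (by simp_all)) hpred]

theorem exists_maximal_isChain_of_length_le {n : ℕ} (hn : ∀ l : List α, l.IsChain r → l.length ≤ n)
    (a : α) : ∃ l : List α, l.IsChain r ∧ l.getLast? = some a ∧ ∀ b ∈ l.head?, ∀ c, ¬ r c b := by
  by_contra! hext
  have hlong : ∀ k, ∃ l : List α, l.IsChain r ∧ l.getLast? = some a ∧ l.length = k + 1 := by
    intro k
    induction k with
    | zero => exact ⟨[a], by simp⟩
    | succ k ih =>
      obtain ⟨l, hl, hlast, hlen⟩ := ih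
      obtain ⟨b, hb, c, hcb⟩ := hext l hl hlast
      refine ⟨c :: l, List.isChain_cons.2 ⟨?_, hl⟩, by simp [List.getLast?_cons, hlast],
        by simp [hlen]⟩
      intro y hy
      rwa [Option.mem_unique hy hb]
  obtain ⟨l, hl, -, hlen⟩ := hlong n
  exact absurd (hn l hl) (by omega)

theorem alternatingSum_map_reverse_of_isChain {G : Type*} [AddCommGroup G] {g h : α → G}
    (hpred : ∀ a b, r b a → g a = h a + h b) (hmin : ∀ a, (∀ b, ¬ r b a) → g a = h a)
    {l : List α} (hl : l.IsChain r) (hmax : ∀ b ∈ l.head?, ∀ a, ¬ r a b) :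
    (l.reverse.map g).alternatingSum = l.getLast?.elim 0 h := by
  induction l using List.reverseRecOn with
  | nil => rfl
  | append_singleton l a ih =>
    have hl' := List.isChain_append.1 hl
    have key := ih hl'.1 fun b hb => hmax b (by simp_all)
    rw [List.reverse_concat, List.map_cons, List.alternatingSum_cons, key, List.getLast?_concat,
      Option.elim_some]
    rcases List.eq_nil_or_concat' l with rfl | ⟨l, b, rfl⟩
    · simp [hmin a (hmax a (by simp))]
    · simp [hpred a b (hl'.2.2 b (by simp) a (by simp))]

theorem sum_range_neg_one_pow_mul_head?_drop {R : Type*} [Ring R] (f : Option α → R) (l : List α) :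
    ∑ n ∈ Finset.range (l.length + 1), (-1) ^ (l.length - n) * f (l.drop n).head? =
      f none - (l.reverse.map fun a => f (some a)).alternatingSum := by
  induction l with
  | nil => simp
  | cons a l ih =>
    rw [List.length_cons, Finset.sum_range_succ']
    simp only [List.drop_succ_cons, Nat.add_sub_add_right, ih, Nat.sub_zero, List.drop_zero,
      List.head?_cons, List.reverse_cons, List.map_append, List.alternatingSum_append,
      List.length_map, List.length_reverse, List.map_cons, List.map_nil,
      List.alternatingSum_singleton, zsmul_eq_mul]
    push_cast
    rw [pow_succ]
    noncomm_ring

theorem card_list_eq_nil_add_sum_cons [Fintype α] {P : List α → Prop} (hP : {l | P l}.Finite) :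
    Nat.card {l // P l} = (if P [] then 1 else 0) + ∑ a, Nat.card {l // P (a :: l)} := by
  have : Finite {l // P l} := hP
  have (a : α) : Finite {l // P (a :: l)} :=
    Finite.of_injective (fun l => (⟨a :: l.1, l.2⟩ : {l // P l})) fun l l' h => by
      simpa [Subtype.ext_iff] using h
  let split : {l // P l} ≃ PLift (P []) ⊕ Σ a, {l // P (a :: l)} :=
    { toFun := fun l => match l with
        | ⟨[], h⟩ => Sum.inl ⟨h⟩
        | ⟨a :: l, h⟩ => Sum.inr ⟨a, l, h⟩
      invFun := Sum.elim (fun h => ⟨[], h.down⟩) fun l => ⟨l.1 :: l.2.1, l.2.2⟩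
      left_inv := by rintro ⟨_ | ⟨a, l⟩, h⟩ <;> rfl
      right_inv := by rintro (h | ⟨a, l, h⟩) <;> rfl }
  rw [Nat.card_congr split, Nat.card_sum, Nat.card_sigma]
  congr 1
  split_ifs with h
  · exact Nat.card_eq_one_iff_unique.2 ⟨⟨fun ⟨_⟩ ⟨_⟩ => rfl⟩, ⟨⟨h⟩⟩⟩
  · exact Nat.card_eq_zero.2 (Or.inl ⟨fun x => h x.down⟩)

end Chains

section RelationCounting

variable {α β : Type*} {r : α → β → Prop}

theorem card_filter_product_add_card_filter_forall_not (hr : Relator.RightUnique r) (s : Finset α)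
    (t : Finset β) : Finset.card {x ∈ s ×ˢ t | r x.1 x.2} +
      Finset.card {a ∈ s | ∀ b ∈ t, ¬ r a b} = s.card := by
  have hinj : Set.InjOn Prod.fst (SetLike.coe {x ∈ s ×ˢ t | r x.1 x.2}) := by
    rintro ⟨a, b⟩ hab ⟨a', b'⟩ hab' rfl
    exact Prod.ext rfl (hr (Finset.mem_filter.1 hab).2 (Finset.mem_filter.1 hab').2)
  have himage : Finset.image Prod.fst {x ∈ s ×ˢ t | r x.1 x.2} =
      {a ∈ s | ¬ ∀ b ∈ t, ¬ r a b} := by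
    ext a
    simp [and_assoc]
  rw [← Finset.card_image_of_injOn hinj, himage, add_comm,
    Finset.card_filter_add_card_filter_not]

theorem card_filter_product_le_right (hr : Relator.LeftUnique r) (s : Finset α) (t : Finset β) :
    Finset.card {x ∈ s ×ˢ t | r x.1 x.2} ≤ t.card := by
  refine Finset.card_le_card_of_injOn Prod.snd
    (fun x hx => (Finset.mem_product.1 (Finset.mem_filter.1 hx).1).2) ?_
  rintro ⟨a, b⟩ hab ⟨a', b'⟩ hab' rfl
  exact Prod.ext (hr (Finset.mem_filter.1 hab).2 (Finset.mem_filter.1 hab').2) rfl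

theorem card_forall_not_add_card_add_ite {r' : α → β → Prop} (hr : Relator.BiUnique r)
    (hr' : Relator.BiUnique r') {s : Finset α} {t : Finset β}
    (hrr' : ∀ a ∈ s, ∀ b ∈ t, ¬ r a b ↔ r' a b) (hs : s.card ≤ 2) (ht : t.card ≤ 2)
    (hpos : 0 < s.card + t.card) {p : Prop}
    (hp : p ↔ s.card + t.card = 1 ∨ (s.card + t.card = 2 ∧ ∃ a ∈ s, ∃ b ∈ t, r a b)) :
    Finset.card {a ∈ s | ∀ b ∈ t, ¬ r a b} + t.card + (if p then 1 else 0) = 2 := by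
  have hpairs := Finset.card_filter_add_card_filter_not (s := s ×ˢ t) fun x => r x.1 x.2
  rw [Finset.card_product, Finset.filter_congr (s := s ×ˢ t) (p := fun x => ¬ r x.1 x.2)
    (q := fun x => r' x.1 x.2) fun x hx => hrr' _ (Finset.mem_product.1 hx).1 _
      (Finset.mem_product.1 hx).2] at hpairs
  have hexists : (∃ a ∈ s, ∃ b ∈ t, r a b) ↔ 0 < Finset.card {x ∈ s ×ˢ t | r x.1 x.2} := by
    simp [Finset.card_pos, Finset.Nonempty, and_assoc]
  have hsplit := card_filter_product_add_card_filter_forall_not hr.2 s t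
  have hle := card_filter_product_le_right hr.1 s t
  have hsplit' := card_filter_product_add_card_filter_forall_not hr'.2 s t
  have hle' := card_filter_product_le_right hr'.1 s t
  -- The product `s ×ˢ t` is split into two partial matchings, which forces the sizes of both.
  simp only [hp, hexists]
  generalize s.card = m at *
  generalize t.card = n at *
  interval_cases m <;> interval_cases n <;> split_ifs <;> omega

end RelationCounting

section RelationMatrix

variable {α β γ : Type*}

/-- The zero-one integer matrix of a relation, through which sources, targets and relations of a
bound quiver enter matrix identities. -/
noncomputable def relMatrix (r : α → β → Prop) : Matrix α β ℤ :=
  Matrix.of fun a b => if r a b then 1 else 0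

theorem relMatrix_apply (r : α → β → Prop) (a : α) (b : β) :
    relMatrix r a b = if r a b then 1 else 0 := rfl

theorem transpose_relMatrix (r : α → β → Prop) : (relMatrix r)ᵀ = relMatrix (flip r) := rfl

theorem relMatrix_mul_apply_of_rel [Fintype β] {r : α → β → Prop} (hr : Relator.RightUnique r)
    {a : α} {b : β} (hab : r a b) (M : Matrix β γ ℤ) (c : γ) : (relMatrix r * M) a c = M b c := by
  have hiff (x : β) : r a x ↔ x = b := ⟨fun h => hr h hab, fun h => h ▸ hab⟩
  simp [Matrix.mul_apply, relMatrix_apply, hiff]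

theorem relMatrix_mul_apply_of_forall_not [Fintype β] {r : α → β → Prop} {a : α}
    (ha : ∀ b, ¬ r a b) (M : Matrix β γ ℤ) (c : γ) : (relMatrix r * M) a c = 0 := by
  simp [Matrix.mul_apply, relMatrix_apply, ha]

theorem mul_relMatrix_apply_of_rel [Fintype α] {r : α → β → Prop} (hr : Relator.LeftUnique r)
    {a : α} {b : β} (hab : r a b) (M : Matrix γ α ℤ) (c : γ) : (M * relMatrix r) c b = M c a := by
  rw [← Matrix.transpose_apply (M * _), Matrix.transpose_mul, transpose_relMatrix,
    relMatrix_mul_apply_of_rel hr.flip hab, Matrix.transpose_apply]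

theorem mul_relMatrix_apply_of_forall_not [Fintype α] {r : α → β → Prop} {b : β}
    (hb : ∀ a, ¬ r a b) (M : Matrix γ α ℤ) (c : γ) : (M * relMatrix r) c b = 0 := by
  simp [Matrix.mul_apply, relMatrix_apply, hb]

theorem one_sub_relMatrix_mul_transpose [Fintype β] [DecidableEq α] {r : α → β → Prop}
    (hr : Relator.BiUnique r) :
    1 - relMatrix r * (relMatrix r)ᵀ = Matrix.diagonal fun a => if ∀ b, ¬ r a b then 1 else 0 := by
  ext a a'
  rw [Matrix.sub_apply, Matrix.one_apply, Matrix.diagonal_apply]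
  by_cases ha : ∀ b, ¬ r a b
  · simp [relMatrix_mul_apply_of_forall_not ha, ha]
  · have hne := ha
    push Not at ha
    obtain ⟨b, hab⟩ := ha
    have hiff : r a' b ↔ a = a' := ⟨fun h => hr.1 hab h, fun h => h ▸ hab⟩
    simp only [relMatrix_mul_apply_of_rel hr.2 hab, Matrix.transpose_apply, relMatrix_apply, hiff,
      hne, if_false, ite_self, sub_self]

theorem relMatrix_mul_diagonal_mul_transpose [Fintype β] [DecidableEq α] [DecidableEq β]
    {r : α → β → Prop} (hr : Relator.LeftUnique r) (p : β → Prop)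
    [DecidablePred p] :
    relMatrix r * Matrix.diagonal (fun b => if p b then (1 : ℤ) else 0) * (relMatrix r)ᵀ =
      Matrix.diagonal fun a => (Nat.card {b // r a b ∧ p b} : ℤ) := by
  ext a a'
  rw [Matrix.mul_apply, Matrix.diagonal_apply]
  simp only [Matrix.mul_diagonal, Matrix.transpose_apply, relMatrix_apply, mul_ite, mul_one,
    mul_zero, ← ite_and]
  split_ifs with h
  · subst h
    rw [Nat.card_eq_fintype_card, Fintype.card_subtype, ← Finset.sum_boole]
    exact Finset.sum_congr rfl fun b _ => if_congr (by tauto) rfl rfl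
  · exact Finset.sum_eq_zero fun b _ => if_neg fun hb => h (hr hb.2.2 hb.1)

theorem relMatrix_mul_transpose [Fintype β] [DecidableEq α] {r : α → β → Prop}
    (hr : Relator.LeftUnique r) :
    relMatrix r * (relMatrix r)ᵀ = Matrix.diagonal fun a => (Nat.card {b // r a b} : ℤ) := by
  simpa using relMatrix_mul_diagonal_mul_transpose hr fun _ => True

theorem exists_isChain_of_relMatrix_pow_ne_zero [Fintype α] [DecidableEq α] {r : α → α → Prop}
    {n : ℕ} {a b : α} (h : (relMatrix r ^ n) a b ≠ 0) :
    ∃ l : List α, l.length = n ∧ (a :: l).IsChain r := by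
  induction n generalizing a with
  | zero => exact ⟨[], rfl, by simp⟩
  | succ n ih =>
    rw [pow_succ', Matrix.mul_apply] at h
    obtain ⟨c, -, hc⟩ := Finset.exists_ne_zero_of_sum_ne_zero h
    obtain ⟨l, hlen, hl⟩ := ih (right_ne_zero_of_mul hc)
    have hac : r a c := by
      by_contra hac
      simp [relMatrix_apply, hac] at hc
    exact ⟨c :: l, by simp [hlen], List.isChain_cons_cons.2 ⟨hac, hl⟩⟩

theorem isNilpotent_relMatrix_of_length_le [Fintype α] [DecidableEq α] {r : α → α → Prop} {n : ℕ}
    (hn : ∀ l : List α, l.IsChain r → l.length ≤ n) : IsNilpotent (relMatrix r) := by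
  refine ⟨n, ?_⟩
  ext a b
  by_contra h
  obtain ⟨l, hlen, hl⟩ := exists_isChain_of_relMatrix_pow_ne_zero h
  simpa [hlen] using hn _ hl

end RelationMatrix

section MatrixIdentities

open Matrix

variable {ι κ ν R : Type*} [CommRing R]

theorem submatrix_mul_transpose_of_injective [Fintype ι] [Fintype κ] [DecidableEq κ] {f : ι → κ}
    (hf : f.Injective) (B : Matrix ν κ R) :
    B.submatrix id f * (B.submatrix id f)ᵀ =
      B * Matrix.diagonal (fun x => if x ∈ Set.range f then (1 : R) else 0) * Bᵀ := by
  ext i j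
  rw [Matrix.mul_apply, Matrix.mul_apply]
  refine Fintype.sum_of_injective f hf _ _ (fun x hx => ?_) fun x => ?_
  · rw [Matrix.mul_diagonal, if_neg hx, mul_zero, zero_mul]
  · simp [Matrix.mul_diagonal]

variable [Fintype κ] [DecidableEq κ]

theorem isUnit_one_add_mul_inv_mul [Fintype ν] [DecidableEq ν] {S : Matrix κ ν R}
    {T : Matrix ν κ R} {N P : Matrix κ κ R} (hST : S * T = N + P) (hN : IsUnit (1 - N))
    (hP : IsUnit (1 + P)) : IsUnit (1 + T * (1 - N)⁻¹ * S) := by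
  have hcomm : 1 + S * (T * (1 - N)⁻¹) = (1 + P) * (1 - N)⁻¹ := by
    calc 1 + S * (T * (1 - N)⁻¹) = (1 - N) * (1 - N)⁻¹ + (N + P) * (1 - N)⁻¹ := by
          rw [Matrix.mul_nonsing_inv _ ((Matrix.isUnit_iff_isUnit_det _).1 hN), ← hST,
            Matrix.mul_assoc]
      _ = (1 + P) * (1 - N)⁻¹ := by rw [← add_mul]; congr 1; abel
  rw [Matrix.isUnit_iff_isUnit_det, Matrix.det_one_add_mul_comm, hcomm,
    ← Matrix.isUnit_iff_isUnit_det]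
  exact hP.mul (Matrix.isUnit_nonsing_inv_iff.2 hN)

theorem inv_one_add_mul_inv_mul [Fintype ν] [DecidableEq ν] {S : Matrix κ ν R} {T : Matrix ν κ R}
    {N P : Matrix κ κ R} (hST : S * T = N + P) (hN : IsUnit (1 - N)) (hP : IsUnit (1 + P)) :
    (1 + T * (1 - N)⁻¹ * S)⁻¹ = 1 - T * (1 + P)⁻¹ * S := by
  have hNdet := (Matrix.isUnit_iff_isUnit_det _).1 hN
  have hmid : (1 - N)⁻¹⁻¹ + S * (1 : Matrix ν ν R)⁻¹ * T = 1 + P := by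
    rw [Matrix.nonsing_inv_nonsing_inv _ hNdet, inv_one, Matrix.mul_one, hST]
    abel
  rw [Matrix.add_mul_mul_inv_eq_sub (A := (1 : Matrix ν ν R)) (U := T) (C := (1 - N)⁻¹) (V := S)
    isUnit_one (Matrix.isUnit_nonsing_inv_iff.2 hN) (hmid ▸ hP), hmid]
  simp only [inv_one, Matrix.one_mul, Matrix.mul_one]

theorem inv_mul_one_sub_mul_transpose_mul_inv {P : Matrix κ κ R} (hP : IsUnit (1 + P)) :
    (1 + P)⁻¹ * (1 - P * Pᵀ) * ((1 + P)⁻¹)ᵀ = (1 + P)⁻¹ + ((1 + P)⁻¹)ᵀ - 1 := by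
  have hdet := (Matrix.isUnit_iff_isUnit_det _).1 hP
  have hleft := Matrix.nonsing_inv_mul _ hdet
  have hright : (1 + P)ᵀ * ((1 + P)⁻¹)ᵀ = 1 := by rw [← Matrix.transpose_mul, hleft, transpose_one]
  calc (1 + P)⁻¹ * (1 - P * Pᵀ) * ((1 + P)⁻¹)ᵀ
      = (1 + P)⁻¹ * ((1 + P) + (1 + P)ᵀ - (1 + P) * (1 + P)ᵀ) * ((1 + P)⁻¹)ᵀ := by
        congr 2
        rw [transpose_add, transpose_one]
        noncomm_ring
    _ = ((1 + P)⁻¹ * (1 + P)) * ((1 + P)⁻¹)ᵀ + (1 + P)⁻¹ * ((1 + P)ᵀ * ((1 + P)⁻¹)ᵀ)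
          - ((1 + P)⁻¹ * (1 + P)) * ((1 + P)ᵀ * ((1 + P)⁻¹)ᵀ) := by noncomm_ring
    _ = (1 + P)⁻¹ + ((1 + P)⁻¹)ᵀ - 1 := by
        rw [hleft, hright, one_mul, mul_one, one_mul, add_comm]

theorem inv_mul_one_sub_mul_transpose_mul {S : Matrix κ ν R} {T : Matrix ν κ R}
    {P : Matrix κ κ R} (hP : IsUnit (1 + P)) (hS : (1 - P * Pᵀ) * S = S - P * Tᵀ) :
    (1 + P)⁻¹ * ((1 - P * Pᵀ) * S) = (1 + P)⁻¹ * S + (1 + P)⁻¹ * Tᵀ - Tᵀ := by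
  have hinv : (1 + P)⁻¹ * P = 1 - (1 + P)⁻¹ := by
    rw [eq_sub_iff_add_eq', ← mul_one_add,
      Matrix.nonsing_inv_mul _ ((Matrix.isUnit_iff_isUnit_det _).1 hP)]
  rw [hS, Matrix.mul_sub, ← Matrix.mul_assoc, hinv, Matrix.sub_mul, Matrix.one_mul]
  abel

theorem sub_mul_inv_mul_one_sub_mul_transpose {S : Matrix κ ν R} {T : Matrix ν κ R}
    {P : Matrix κ κ R} (hP : IsUnit (1 + P)) (hS : (1 - P * Pᵀ) * S = S - P * Tᵀ) :
    (Sᵀ - T * (1 + P)⁻¹) * (1 - P * Pᵀ) * (Sᵀ - T * (1 + P)⁻¹)ᵀ =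
      Sᵀ * (1 - P * Pᵀ) * S + T * Tᵀ - T * (1 + P)⁻¹ * S - (T * (1 + P)⁻¹ * S)ᵀ := by
  have hquad := inv_mul_one_sub_mul_transpose_mul_inv hP
  have hcross := inv_mul_one_sub_mul_transpose_mul hP hS
  have hcross' := congrArg transpose hcross
  have hsymm : (1 - P * Pᵀ)ᵀ = 1 - P * Pᵀ := by simp
  set D := 1 - P * Pᵀ
  set M := (1 + P)⁻¹
  simp only [transpose_mul, transpose_add, transpose_sub, transpose_transpose, hsymm] at hcross'
  calc (Sᵀ - T * M) * D * (Sᵀ - T * M)ᵀ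
      = Sᵀ * D * S - T * (M * (D * S)) - Sᵀ * D * Mᵀ * Tᵀ + T * (M * D * Mᵀ) * Tᵀ := by
        simp only [transpose_mul, transpose_sub, transpose_transpose, Matrix.sub_mul,
          Matrix.mul_sub, Matrix.mul_assoc]
        abel
    _ = Sᵀ * D * S + T * Tᵀ - T * M * S - (T * M * S)ᵀ := by
        rw [hcross, hcross', hquad]
        simp only [transpose_mul, Matrix.sub_mul, Matrix.add_mul, Matrix.mul_sub, Matrix.mul_add,
          Matrix.mul_assoc, Matrix.mul_one]
        abel

end MatrixIdentities

namespace BQuiv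

variable {V A : Type} {Q : BQuiv V A}

attribute [ext] Path

/-- The arrow–vertex incidence matrix of the sources of the arrows. -/
noncomputable def srcMatrix (Q : BQuiv V A) : Matrix A V ℤ := relMatrix fun a i => Q.src a = i

/-- The vertex–arrow incidence matrix of the targets of the arrows. -/
noncomputable def tgtMatrix (Q : BQuiv V A) : Matrix V A ℤ := relMatrix fun i a => Q.tgt a = i

/-- The composable pairs of arrows outside the relation set: the permitted paths of length two. -/
def nonRel (Q : BQuiv V A) (a b : A) : Prop := Q.src a = Q.tgt b ∧ ¬ Q.rel a b

theorem IsGentle.biUnique_rel (hQ : Q.IsGentle) : Relator.BiUnique Q.rel :=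
  ⟨fun a b c => hQ.unique_rel_post c a b, fun a b c => hQ.unique_rel_pre a b c⟩

theorem IsGentle.biUnique_nonRel (hQ : Q.IsGentle) : Relator.BiUnique Q.nonRel :=
  ⟨fun a b c h h' => hQ.unique_nonrel_post c a b h.1 h'.1 h.2 h'.2,
    fun a b c h h' => hQ.unique_nonrel_pre a b c h.1 h'.1 h.2 h'.2⟩

theorem IsGentle.exists_length_le_of_isChain_nonRel (hQ : Q.IsGentle) :
    ∃ m, ∀ l : List A, l.IsChain Q.nonRel → l.length ≤ m := by
  obtain ⟨m, -, hm⟩ := hQ.admissible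
  refine ⟨m, fun l hl => ?_⟩
  by_contra! hlt
  have htake := hl.take m
  exact hm (l.take m) (by simp; omega) (htake.imp fun _ _ h => h.1) (htake.imp fun _ _ h => h.2)

theorem IsGentle.nodup_of_isChain_rel (hQ : Q.IsGentle) (hfc : ¬ ∃ p : Path Q, IsFullCycle Q p)
    {l : List A} (hl : l.IsChain Q.rel) : l.Nodup := by
  by_contra hd
  obtain ⟨a, s, hnodup, hchain, hwrap⟩ := exists_cycle_of_isChain_of_not_nodup hl hd
  refine hfc ⟨⟨Q.tgt a, a :: s, hchain.imp hQ.rel_comp,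
    fun b hb => hQ.rel_comp b a (hwrap b hb)⟩, by simp, hchain, rfl, hnodup, fun b c hb hc => ?_⟩
  obtain rfl : a = c := by simpa using hc
  exact hwrap b hb

theorem IsGentle.srcMatrix_mul_tgtMatrix [Fintype V] (hQ : Q.IsGentle) :
    srcMatrix Q * tgtMatrix Q = relMatrix Q.nonRel + relMatrix Q.rel := by
  ext a b
  have hsrc : Relator.RightUnique fun (a : A) i => Q.src a = i := fun _ _ _ h h' => h.symm.trans h'
  rw [srcMatrix, relMatrix_mul_apply_of_rel hsrc rfl, Matrix.add_apply]
  have hcomp := hQ.rel_comp a b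
  by_cases h : Q.src a = Q.tgt b <;> by_cases hr : Q.rel a b <;>
    simp_all [tgtMatrix, relMatrix_apply, nonRel, eq_comm]

section Invertibility

variable [Fintype A]

theorem IsGentle.length_le_of_isChain_rel (hQ : Q.IsGentle)
    (hfc : ¬ ∃ p : Path Q, IsFullCycle Q p) (l : List A) (hl : l.IsChain Q.rel) :
    l.length ≤ Fintype.card A :=
  (hQ.nodup_of_isChain_rel hfc hl).length_le_card

theorem IsGentle.isUnit_one_add_relMatrix_rel (hQ : Q.IsGentle)
    (hfc : ¬ ∃ p : Path Q, IsFullCycle Q p) : IsUnit (1 + relMatrix Q.rel) :=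
  (isNilpotent_relMatrix_of_length_le (hQ.length_le_of_isChain_rel hfc)).isUnit_one_add

theorem IsGentle.isUnit_one_sub_relMatrix_nonRel (hQ : Q.IsGentle) :
    IsUnit (1 - relMatrix Q.nonRel) :=
  have ⟨_, hm⟩ := hQ.exists_length_le_of_isChain_nonRel
  (isNilpotent_relMatrix_of_length_le hm).isUnit_one_sub

end Invertibility

section Cartan

theorem IsGentle.finite_setOf_of_isChain_nonRel [Finite A] (hQ : Q.IsGentle)
    {P : List A → Prop} (hP : ∀ l, P l → l.IsChain Q.nonRel) : {l | P l}.Finite :=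
  have ⟨m, hm⟩ := hQ.exists_length_le_of_isChain_nonRel
  (List.finite_length_le A m).subset fun l hl => hm l (hP l hl)

variable [Fintype A]

/-- The number of permitted paths with last arrow `a` and source `j`; the entries of the Cartan
matrix are computed from it by removing the last arrow. -/
noncomputable def permittedMatrix (Q : BQuiv V A) : Matrix A V ℤ := fun a j =>
  Nat.card {l : List A // (a :: l).IsChain Q.nonRel ∧
    ∀ x, (a :: l).getLast? = some x → Q.src x = j}

theorem IsGentle.permittedMatrix_eq_add (hQ : Q.IsGentle) :
    permittedMatrix Q = srcMatrix Q + relMatrix Q.nonRel * permittedMatrix Q := by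
  ext a j
  rw [Matrix.add_apply, Matrix.mul_apply, permittedMatrix,
    card_list_eq_nil_add_sum_cons (hQ.finite_setOf_of_isChain_nonRel fun l hl => hl.1.tail)]
  push_cast
  congr 1
  · simp [srcMatrix, relMatrix_apply]
  · refine Finset.sum_congr rfl fun b _ => ?_
    by_cases h : Q.nonRel a b <;>
      simp [h, relMatrix_apply, permittedMatrix, List.isChain_cons_cons, List.getLast?_cons_cons]

theorem IsGentle.permittedMatrix_eq (hQ : Q.IsGentle) :
    permittedMatrix Q = (1 - relMatrix Q.nonRel)⁻¹ * srcMatrix Q := by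
  have hdet := (Matrix.isUnit_iff_isUnit_det _).1 hQ.isUnit_one_sub_relMatrix_nonRel
  have hrec : (1 - relMatrix Q.nonRel) * permittedMatrix Q = srcMatrix Q := by
    rw [Matrix.sub_mul, Matrix.one_mul, sub_eq_iff_eq_add]
    exact hQ.permittedMatrix_eq_add
  rw [← hrec, Matrix.nonsing_inv_mul_cancel_left _ _ hdet]

/-- A permitted path with given ends is determined by its list of arrows. -/
def permittedPathEquiv (Q : BQuiv V A) (i j : V) :
    {p : Path Q // p.Permitted ∧ p.base = j ∧ p.tgtV = i} ≃
      {l : List A // l.IsChain Q.nonRel ∧ (∀ x, l.getLast? = some x → Q.src x = j) ∧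
        l.head?.elim j Q.tgt = i} where
  toFun p := ⟨p.1.arrows,
    List.isChain_iff_getElem.2 fun n hn => ⟨List.isChain_iff_getElem.1 p.1.chain n hn,
      List.isChain_iff_getElem.1 p.2.1 n hn⟩,
    fun x hx => (p.1.base_eq x hx).trans p.2.2.1, by obtain ⟨p, -, rfl, hi⟩ := p; exact hi⟩
  invFun l := ⟨⟨j, l.1, l.2.1.imp fun _ _ h => h.1, l.2.2.1⟩, l.2.1.imp fun _ _ h => h.2, rfl,
    l.2.2.2⟩
  left_inv p := Subtype.ext (Path.ext p.2.2.1.symm rfl)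
  right_inv _ := rfl

theorem IsGentle.cartan_eq_one_add [DecidableEq V] (hQ : Q.IsGentle) :
    cartan Q = 1 + tgtMatrix Q * permittedMatrix Q := by
  ext i j
  rw [Matrix.add_apply, Matrix.mul_apply, cartan, Nat.card_congr (permittedPathEquiv Q i j),
    card_list_eq_nil_add_sum_cons (hQ.finite_setOf_of_isChain_nonRel fun l hl => hl.1)]
  push_cast
  congr 1
  · simp [Matrix.one_apply, eq_comm]
  · refine Finset.sum_congr rfl fun a _ => ?_
    by_cases h : Q.tgt a = i <;> simp [h, tgtMatrix, relMatrix_apply, permittedMatrix]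

theorem IsGentle.cartan_eq [DecidableEq V] (hQ : Q.IsGentle) :
    cartan Q = 1 + tgtMatrix Q * (1 - relMatrix Q.nonRel)⁻¹ * srcMatrix Q := by
  rw [hQ.cartan_eq_one_add, hQ.permittedMatrix_eq, Matrix.mul_assoc]

variable [Fintype V] [DecidableEq V]

theorem IsGentle.isUnit_cartan (hQ : Q.IsGentle) (hR : IsUnit (1 + relMatrix Q.rel)) :
    IsUnit (cartan Q) := by
  rw [hQ.cartan_eq]
  exact isUnit_one_add_mul_inv_mul hQ.srcMatrix_mul_tgtMatrix hQ.isUnit_one_sub_relMatrix_nonRel hR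

theorem IsGentle.inv_cartan (hQ : Q.IsGentle) (hR : IsUnit (1 + relMatrix Q.rel)) :
    (cartan Q)⁻¹ = 1 - tgtMatrix Q * (1 + relMatrix Q.rel)⁻¹ * srcMatrix Q := by
  rw [hQ.cartan_eq]
  exact inv_one_add_mul_inv_mul hQ.srcMatrix_mul_tgtMatrix hQ.isUnit_one_sub_relMatrix_nonRel hR

end Cartan

section ForbiddenThreads

/-- The vertices whose trivial path is a forbidden thread. -/
def IsTrivialForbThread (Q : BQuiv V A) (i : V) : Prop :=
  Q.deg i = 1 ∨ (Q.deg i = 2 ∧ ∃ α β, Q.src α = i ∧ Q.tgt β = i ∧ Q.rel α β)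

/-- The last arrow on the source side of a forbidden thread, or its vertex if it is trivial: this
datum determines the thread. -/
def FThread.sourceEnd (t : FThread Q) : A ⊕ V := t.1.arrows.getLast?.elim (.inr t.1.base) .inl

theorem FThread.isChain_rel (t : FThread Q) : t.1.arrows.IsChain Q.rel := by
  rcases t.2 with h | h
  · exact h.2.1
  · simp [h.1]

theorem FThread.not_rel_of_mem_head? (hQ : Q.IsGentle) (t : FThread Q) :
    ∀ b ∈ t.1.arrows.head?, ∀ a, ¬ Q.rel a b := by
  intro b hb a hab
  rcases t.2 with h | h
  · exact h.2.2.1 a b hb (hQ.rel_comp a b hab) hab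
  · simp [h.1] at hb

theorem FThread.not_rel_of_mem_getLast? (hQ : Q.IsGentle) (t : FThread Q) :
    ∀ a ∈ t.1.arrows.getLast?, ∀ c, ¬ Q.rel a c := by
  intro a ha c hac
  rcases t.2 with h | h
  · exact h.2.2.2 a c ha (hQ.rel_comp a c hac) hac
  · simp [h.1] at ha

theorem IsGentle.sourceEnd_injective (hQ : Q.IsGentle) :
    Function.Injective (FThread.sourceEnd (Q := Q)) := by
  intro t t' h
  have hends : t.1.arrows.getLast? = t'.1.arrows.getLast? ∧ t.1.base = t'.1.base := by
    have hbase := t.1.base_eq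
    have hbase' := t'.1.base_eq
    unfold FThread.sourceEnd at h
    cases hlast : t.1.arrows.getLast? <;> cases hlast' : t'.1.arrows.getLast? <;>
      simp_all
  exact Subtype.ext <| Path.ext hends.2 <| eq_of_isChain_of_getLast?_eq hQ.biUnique_rel.1
    t.isChain_rel t'.isChain_rel (t.not_rel_of_mem_head? hQ) (t'.not_rel_of_mem_head? hQ) hends.1

theorem IsGentle.finite_fThread [Finite V] [Finite A] (hQ : Q.IsGentle) : Finite (FThread Q) :=
  Finite.of_injective _ hQ.sourceEnd_injective

theorem FThread.inr_mem_range_sourceEnd (i : V) :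
    .inr i ∈ Set.range (FThread.sourceEnd (Q := Q)) ↔ IsTrivialForbThread Q i := by
  constructor
  · rintro ⟨t, ht⟩
    unfold FThread.sourceEnd at ht
    cases hlast : t.1.arrows.getLast? with
    | some a => simp [hlast] at ht
    | none =>
      obtain rfl : t.1.base = i := by simpa [hlast] using ht
      rcases t.2 with h | h
      · exact absurd (List.getLast?_eq_none_iff.1 hlast) h.1
      · exact h.2
  · exact fun hi => ⟨⟨⟨i, [], List.isChain_nil, by simp⟩, .inr ⟨rfl, hi⟩⟩, rfl⟩

theorem IsGentle.inl_mem_range_sourceEnd [Finite A] (hQ : Q.IsGentle)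
    (hfc : ¬ ∃ p : Path Q, IsFullCycle Q p) (a : A) :
    .inl a ∈ Set.range (FThread.sourceEnd (Q := Q)) ↔ ∀ c, ¬ Q.rel a c := by
  constructor
  · rintro ⟨t, ht⟩
    refine t.not_rel_of_mem_getLast? hQ a ?_
    unfold FThread.sourceEnd at ht
    cases hlast : t.1.arrows.getLast? <;> simp_all
  · intro ha
    have := Fintype.ofFinite A
    obtain ⟨l, hl, hlast, hmax⟩ :=
      exists_maximal_isChain_of_length_le (hQ.length_le_of_isChain_rel hfc) a
    have hne : l ≠ [] := by rintro rfl; simp at hlast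
    refine ⟨⟨⟨Q.src a, l, hl.imp hQ.rel_comp, fun b hb => by simp_all⟩,
      .inl ⟨hne, hl, fun c b hb _ => hmax b hb c, fun b c hb _ => ?_⟩⟩, ?_⟩
    · obtain rfl : a = b := by simpa [hlast] using hb
      exact ha c
    · simp [FThread.sourceEnd, hlast]

end ForbiddenThreads

section Incidence

/-- The half-edges over a forbidden thread are its cut positions. -/
def FThread.split (t : FThread Q) (n : Fin (t.1.arrows.length + 1)) : FSplit Q :=
  ⟨(t, n), Nat.le_of_lt_succ n.2⟩

theorem FThread.card_split (t : FThread Q) (P : FSplit Q → Prop) (i : V) :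
    Nat.card {x : FSplit Q // x.center = i ∧ x.thread = t ∧ P x} =
      Nat.card {n // (t.split n).center = i ∧ P (t.split n)} :=
  Nat.card_congr
    { toFun := fun x => ⟨⟨x.1.1.2, by obtain ⟨x, -, rfl, -⟩ := x; exact Nat.lt_succ_of_le x.2⟩, by
        obtain ⟨x, hi, rfl, hP⟩ := x; exact ⟨hi, hP⟩⟩
      invFun := fun n => ⟨t.split n.1, n.2.1, rfl, n.2.2⟩
      left_inv := by rintro ⟨x, hi, rfl, hP⟩; rfl
      right_inv := fun _ => rfl }

theorem fInc_apply_eq_sum {W : Type} (e : W ≃ FThread Q) (i : V) (w : W) :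
    fInc Q e i w = ∑ n ∈ Finset.range ((e w).1.arrows.length + 1),
      (-1) ^ ((e w).1.arrows.length - n) * if (e w).1.vertexAt n = i then 1 else 0 := by
  rw [fInc, FThread.card_split, FThread.card_split, Finset.sum_range, Nat.card_eq_fintype_card,
    Nat.card_eq_fintype_card, Fintype.card_subtype, Fintype.card_subtype, ← Finset.sum_boole,
    ← Finset.sum_boole, ← Finset.sum_sub_distrib]
  refine Finset.sum_congr rfl fun n _ => ?_
  have hsign : (-1 : ℤ) ^ ((e w).1.arrows.length - n) =
      if ((e w).split n).posSign then 1 else -1 := by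
    rcases Nat.even_or_odd ((e w).1.arrows.length - n) with hn | hn
    · exact hn.neg_one_pow.trans (if_pos hn).symm
    · exact hn.neg_one_pow.trans (if_neg (Nat.not_even_iff_odd.2 hn)).symm
  rw [hsign, show (e w).1.vertexAt n = ((e w).split n).center from rfl]
  split_ifs <;> simp_all

theorem fInc_apply_eq_sub_alternatingSum {W : Type} (e : W ≃ FThread Q) (i : V) (w : W) :
    fInc Q e i w = (if (e w).1.base = i then 1 else 0) -
      ((e w).1.arrows.reverse.map fun a => tgtMatrix Q i a).alternatingSum := by
  rw [fInc_apply_eq_sum]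
  exact sum_range_neg_one_pow_mul_head?_drop
    (fun o => if o.elim (e w).1.base Q.tgt = i then (1 : ℤ) else 0) _

variable [Fintype A]

theorem alternatingSum_tgtMatrix (hrel : Relator.LeftUnique Q.rel)
    (hR : IsUnit (1 + relMatrix Q.rel)) {l : List A} (hl : l.IsChain Q.rel)
    (hmax : ∀ b ∈ l.head?, ∀ a, ¬ Q.rel a b) (i : V) :
    (l.reverse.map fun a => tgtMatrix Q i a).alternatingSum =
      l.getLast?.elim 0 fun a => (tgtMatrix Q * (1 + relMatrix Q.rel)⁻¹) i a := by
  have hT : tgtMatrix Q = tgtMatrix Q * (1 + relMatrix Q.rel)⁻¹ +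
      tgtMatrix Q * (1 + relMatrix Q.rel)⁻¹ * relMatrix Q.rel := by
    rw [Matrix.mul_assoc, ← Matrix.mul_add, ← mul_one_add,
      Matrix.nonsing_inv_mul _ ((Matrix.isUnit_iff_isUnit_det _).1 hR), Matrix.mul_one]
  refine alternatingSum_map_reverse_of_isChain (fun a b hba => ?_) (fun a ha => ?_) hl hmax
  · rw [congrFun₂ hT i a, Matrix.add_apply, mul_relMatrix_apply_of_rel hrel hba]
  · rw [congrFun₂ hT i a, Matrix.add_apply, mul_relMatrix_apply_of_forall_not ha, add_zero]

variable [DecidableEq V]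

/-- Its columns at `sourceEnd t` are the columns of the incidence matrix at the forbidden threads
`t`; the column at an arrow `a` is that of the thread ending in `a`. -/
noncomputable def sourceEndMatrix (Q : BQuiv V A) : Matrix V (A ⊕ V) ℤ :=
  Matrix.fromCols ((srcMatrix Q)ᵀ - tgtMatrix Q * (1 + relMatrix Q.rel)⁻¹) 1

theorem IsGentle.fInc_eq_submatrix (hQ : Q.IsGentle) (hR : IsUnit (1 + relMatrix Q.rel))
    {W : Type} (e : W ≃ FThread Q) :
    fInc Q e = (sourceEndMatrix Q).submatrix id (FThread.sourceEnd ∘ e) := by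
  ext i w
  rw [fInc_apply_eq_sub_alternatingSum, alternatingSum_tgtMatrix hQ.biUnique_rel.1 hR
    (e w).isChain_rel ((e w).not_rel_of_mem_head? hQ), Matrix.submatrix_apply,
    Function.comp_apply, FThread.sourceEnd]
  have hbase := (e w).1.base_eq
  cases hlast : (e w).1.arrows.getLast? with
  | none => simp [sourceEndMatrix, Matrix.one_apply, eq_comm]
  | some a => simp [sourceEndMatrix, srcMatrix, relMatrix_apply, hbase a hlast]

theorem IsGentle.diagonal_mem_range_sourceEnd (hQ : Q.IsGentle)
    (hfc : ¬ ∃ p : Path Q, IsFullCycle Q p) :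
    (Matrix.diagonal fun x => if x ∈ Set.range (FThread.sourceEnd (Q := Q)) then (1 : ℤ) else 0) =
      Matrix.fromBlocks (1 - relMatrix Q.rel * (relMatrix Q.rel)ᵀ) 0 0
        (Matrix.diagonal fun i => if IsTrivialForbThread Q i then 1 else 0) := by
  rw [one_sub_relMatrix_mul_transpose hQ.biUnique_rel, Matrix.fromBlocks_diagonal]
  congr 1
  ext (a | i)
  · simp only [hQ.inl_mem_range_sourceEnd hfc, Sum.elim_inl]
  · simp only [FThread.inr_mem_range_sourceEnd, Sum.elim_inr]

end Incidence

section LocalCount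

theorem IsGentle.exists_arrow_at (hQ : Q.IsGentle) (i : V) :
    (∃ a, Q.src a = i) ∨ ∃ a, Q.tgt a = i := by
  obtain ⟨b⟩ := hQ.has_arrow
  rcases (hQ.connected i (Q.src b)).cases_head with h | ⟨c, ⟨a, h | h⟩, -⟩
  · exact .inl ⟨b, h.symm⟩
  · exact .inl ⟨a, h.1⟩
  · exact .inr ⟨a, h.2⟩

theorem deg_eq_card_add_card [Fintype A] (i : V) :
    Q.deg i = Finset.card {a | Q.src a = i} + Finset.card {a | Q.tgt a = i} := by
  simp only [deg, Nat.card_eq_fintype_card, Fintype.card_subtype]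

theorem isTrivialForbThread_iff [Fintype A] (i : V) :
    IsTrivialForbThread Q i ↔
      Finset.card {a | Q.src a = i} + Finset.card {a | Q.tgt a = i} = 1 ∨
      (Finset.card {a | Q.src a = i} + Finset.card {a | Q.tgt a = i} = 2 ∧
        ∃ a ∈ Finset.filter (Q.src · = i) .univ, ∃ b ∈ Finset.filter (Q.tgt · = i) .univ,
          Q.rel a b) := by
  simp [IsTrivialForbThread, deg_eq_card_add_card]

theorem IsGentle.card_terminal_add_card_in_add_trivial [Finite A] (hQ : Q.IsGentle) (i : V) :
    Nat.card {a // Q.src a = i ∧ ∀ c, ¬ Q.rel a c} + Nat.card {a // Q.tgt a = i} +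
      (if IsTrivialForbThread Q i then 1 else 0) = 2 := by
  have := Fintype.ofFinite A
  have hout := hQ.out_le i
  have hin := hQ.in_le i
  simp only [Nat.card_eq_fintype_card, Fintype.card_subtype] at hout hin ⊢
  have hpos : 0 < Finset.card {a | Q.src a = i} + Finset.card {a | Q.tgt a = i} := by
    simpa [Finset.card_pos, Finset.Nonempty] using hQ.exists_arrow_at i
  have hterm : Finset.filter (fun a => Q.src a = i ∧ ∀ c, ¬ Q.rel a c) .univ =
      {a ∈ Finset.filter (Q.src · = i) .univ |
        ∀ c ∈ Finset.filter (Q.tgt · = i) .univ, ¬ Q.rel a c} := by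
    ext a
    simp only [Finset.mem_filter, Finset.mem_univ, true_and]
    exact and_congr_right fun ha => forall_congr' fun c =>
      ⟨fun h _ => h, fun h hac => h ((hQ.rel_comp a c hac).symm.trans ha) hac⟩
  have hnonRel : ∀ a ∈ Finset.filter (Q.src · = i) .univ, ∀ b ∈ Finset.filter (Q.tgt · = i) .univ,
      ¬ Q.rel a b ↔ Q.nonRel a b := fun a ha b hb =>
    (and_iff_right ((Finset.mem_filter.1 ha).2.trans (Finset.mem_filter.1 hb).2.symm)).symm
  rw [hterm]
  convert card_forall_not_add_card_add_ite hQ.biUnique_rel hQ.biUnique_nonRel hnonRel hout hin hpos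
    (isTrivialForbThread_iff i)

theorem IsGentle.srcMatrix_mul_add_tgtMatrix_mul_add [Fintype A] [DecidableEq V]
    (hQ : Q.IsGentle) :
    (srcMatrix Q)ᵀ * (1 - relMatrix Q.rel * (relMatrix Q.rel)ᵀ) * srcMatrix Q +
      tgtMatrix Q * (tgtMatrix Q)ᵀ +
      Matrix.diagonal (fun i => if IsTrivialForbThread Q i then 1 else 0) = 2 := by
  have hsrc : (srcMatrix Q)ᵀ * (Matrix.diagonal fun a => if ∀ c, ¬ Q.rel a c then (1 : ℤ) else 0) *
      srcMatrix Q =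
        Matrix.diagonal fun i => (Nat.card {a // Q.src a = i ∧ ∀ c, ¬ Q.rel a c} : ℤ) :=
    relMatrix_mul_diagonal_mul_transpose (r := fun i a => Q.src a = i)
      (fun _ _ _ h h' => h.symm.trans h') fun a => ∀ c, ¬ Q.rel a c
  have htgt : tgtMatrix Q * (tgtMatrix Q)ᵀ =
      Matrix.diagonal fun i => (Nat.card {a // Q.tgt a = i} : ℤ) :=
    relMatrix_mul_transpose (r := fun i a => Q.tgt a = i) fun _ _ _ h h' => h.symm.trans h'
  rw [one_sub_relMatrix_mul_transpose hQ.biUnique_rel, hsrc, htgt, Matrix.diagonal_add,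
    Matrix.diagonal_add, ← Matrix.diagonal_ofNat]
  congr 1
  ext i
  exact_mod_cast hQ.card_terminal_add_card_in_add_trivial i

end LocalCount

theorem IsGentle.one_sub_mul_srcMatrix [Fintype A] (hQ : Q.IsGentle) :
    (1 - relMatrix Q.rel * (relMatrix Q.rel)ᵀ) * srcMatrix Q =
      srcMatrix Q - relMatrix Q.rel * (tgtMatrix Q)ᵀ := by
  rw [Matrix.sub_mul, Matrix.one_mul, Matrix.mul_assoc]
  congr 1
  ext a i
  by_cases h : ∀ c, ¬ Q.rel a c
  · simp only [relMatrix_mul_apply_of_forall_not h]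
  · push Not at h
    obtain ⟨c, hac⟩ := h
    rw [relMatrix_mul_apply_of_rel hQ.biUnique_rel.2 hac,
      relMatrix_mul_apply_of_rel hQ.biUnique_rel.2 hac, transpose_relMatrix,
      relMatrix_mul_apply_of_rel hQ.biUnique_rel.1.flip hac]
    simp only [srcMatrix, tgtMatrix, Matrix.transpose_apply, relMatrix_apply, hQ.rel_comp a c hac]

theorem IsGentle.fInc_mul_transpose [Finite V] [DecidableEq V] [Fintype A] (hQ : Q.IsGentle)
    (hfc : ¬ ∃ p : Path Q, IsFullCycle Q p) {W : Type} [Fintype W] (e : W ≃ FThread Q) :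
    fInc Q e * (fInc Q e)ᵀ =
      ((srcMatrix Q)ᵀ - tgtMatrix Q * (1 + relMatrix Q.rel)⁻¹) *
        (1 - relMatrix Q.rel * (relMatrix Q.rel)ᵀ) *
        ((srcMatrix Q)ᵀ - tgtMatrix Q * (1 + relMatrix Q.rel)⁻¹)ᵀ +
      Matrix.diagonal fun i => if IsTrivialForbThread Q i then 1 else 0 := by
  have := Fintype.ofFinite V
  rw [hQ.fInc_eq_submatrix (hQ.isUnit_one_add_relMatrix_rel hfc),
    submatrix_mul_transpose_of_injective (hQ.sourceEnd_injective.comp e.injective)]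
  simp only [e.surjective.range_comp]
  rw [hQ.diagonal_mem_range_sourceEnd hfc, sourceEndMatrix, Matrix.fromCols_mul_fromBlocks,
    Matrix.transpose_fromCols, Matrix.fromCols_mul_fromRows]
  simp only [Matrix.mul_zero, add_zero, zero_add, Matrix.one_mul, Matrix.transpose_one,
    Matrix.mul_one]

theorem IsGentle.inv_cartan_add_transpose [Fintype V] [DecidableEq V] [Finite A]
    (hQ : Q.IsGentle) (hfc : ¬ ∃ p : Path Q, IsFullCycle Q p) {W : Type} [Fintype W]
    (e : W ≃ FThread Q) :
    (cartan Q)⁻¹ + ((cartan Q)⁻¹)ᵀ = fInc Q e * (fInc Q e)ᵀ := by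
  have := Fintype.ofFinite A
  have hR := hQ.isUnit_one_add_relMatrix_rel hfc
  set Y := tgtMatrix Q * (1 + relMatrix Q.rel)⁻¹ * srcMatrix Q
  calc (cartan Q)⁻¹ + ((cartan Q)⁻¹)ᵀ = 2 - Y - Yᵀ := by
        rw [hQ.inv_cartan hR, Matrix.transpose_sub, Matrix.transpose_one, ← one_add_one_eq_two]
        abel
    _ = fInc Q e * (fInc Q e)ᵀ := by
        rw [hQ.fInc_mul_transpose hfc,
          sub_mul_inv_mul_one_sub_mul_transpose hR hQ.one_sub_mul_srcMatrix,
          ← hQ.srcMatrix_mul_add_tgtMatrix_mul_add]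
        abel

end BQuiv

/-- Let `(Q, I)` be a gentle bound quiver containing no full cycle
(equivalently, such that `kQ/I` has finite global dimension), with Cartan matrix `C`
and forbidden marked ribbon graph `▲(Q, I) = (Ḡ, ≤̄, σ̄)`.  Then `C` is invertible over
`ℤ` (`det C = ±1`) and `C⁻¹ + C⁻ᵀ = Inc(Ḡ, σ̄) ⬝ Inc(Ḡ, σ̄)ᵀ`. -/
theorem stmt13 {V A : Type} [Fintype V] [Fintype A] [DecidableEq V]
    (Q : BQuiv V A) (hQ : Q.IsGentle)
    (hfc : ¬ ∃ p : BQuiv.Path Q, IsFullCycle Q p) :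
    ((cartan Q).det = 1 ∨ (cartan Q).det = -1) ∧
    Finite (FThread Q) ∧
    (∀ (W : Type) [Fintype W] (e : W ≃ FThread Q),
      (cartan Q)⁻¹ + ((cartan Q)⁻¹)ᵀ = fInc Q e * (fInc Q e)ᵀ) := by
  have hC := hQ.isUnit_cartan (hQ.isUnit_one_add_relMatrix_rel hfc)
  exact ⟨Int.isUnit_iff.1 ((Matrix.isUnit_iff_isUnit_det _).1 hC), hQ.finite_fThread,
    fun _ _ e => hQ.inv_cartan_add_transpose hfc e⟩
end
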